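/- Fix an integer Δ ≥ 2. For all ε > 0 and δ > 0 there exists p > 0 such that for every probability distribution μ on a finite set D ⊂ ℝ with μ({x}) ≤ p for all x ∈ D, there exist a positive integer L, an output dimension d_O, and GIN parameters θ with d_O-dimensional output such that for every finite connected simple graph G = (V,E) with maximum degree at most Δ the following holds. Sample labels (r_v)_{v∈V} i.i.d. from μ, run the GIN with input features h_v = (deg(v), r_v) to obtain outputs z_v ∈ ℝ^{d_O}, replace z_v by the zero vector for every v such that there exist distinct s,t ∈ N_L(v) with r_s = r_t, and set F = {{u,v} ∈ E : ⟨z_u, z_v⟩ > 0.5}. Then F is a matching of G for every realization of the labels, and with probability at least 1 − δ it satisfies |F| ≥ ν(G)/(1+ε). -/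

import Mathlib

/-!
The GIN simulates a local algorithm that improves a matching by short augmenting paths.

*What a GIN can compute.* On graphs of degree at most `Δ` with labels in the finite set `D`, there
are only finitely many level-`l` trees. If the `i`-th tree is represented by `τ ^ i` with `τ`
transcendental, and the parameter `ε` of the layer is `Δ`, then the aggregated value determines the
pair consisting of a tree and the multiset of the trees of the neighbours (`aggregate_inj`). As an
MLP interpolates any function on finitely many reals, a GIN of depth `K` can output any function
of the level-`K` tree of a vertex (`exists_gin`). The depth may depend on `D`, whereas the radius
`L = 2 k` of the zeroing rule may not grow with it: the bound `p` is chosen before `D`.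

*The algorithm.* A matching is encoded by the label of the partner of every vertex. A word is a
sequence of `2 j + 2` labels with `j < k`, and a step (`step`) augments the current matching along
all occurrences of one word simultaneously, where an occurrence is an augmenting path with the
labels given by the word. If the labels around each of its vertices are distinct, two occurrences of
the same word are disjoint or equal (`Occ.unique`), so the result is again a matching (`Inv.step`).
Each step is local, because the existence of an occurrence through a vertex can be read off from its
tree (`loc_step`). A sweep runs once through the finitely many words with letters in `D`.

*Progress.* Comparing with a maximum matching, the number of short augmenting paths is at least the
number of unmatched vertices minus its optimum `n - 2 ν`, minus `n / k` (`card_aug`). Unless it starts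
at a bad vertex, that is, one whose `2 k`-ball has a repeated label, each of these paths has a vertex
that is touched by some augmentation during the next sweep, and the number of touched vertices is at
most `2 k` times the number of newly matched ones (`card_touched`). So after `T` sweeps the number of
unmatched vertices exceeds `n - 2 ν` by at most `n / k + 4 k² n / T` plus the number of bad vertices
(`sweeps`).

*Output.* A matched vertex outputs the unit vector that encodes the pair of its own label and the
label of its partner. Two adjacent vertices that have not been zeroed have the same nonzero vector exactly
if they are partners (`mem_output`), so `F` is a matching for all labels, and it misses only edges at
bad vertices.

*Probability.* A vertex is bad with probability at most `(Δ + 1) ^ (4 k) p`, so by Markov's inequality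
(`prob_of_bad`) there are few bad vertices. Finally, the errors are multiples of `n`, which is at most
`2 (Δ + 1) ν` for connected graphs with an edge (`card_le_matchingNumber`).
-/

/-- An MLP: a finite alternating composition of affine maps and the entrywise ReLU
activation `x ↦ max(x, 0)`. -/
inductive IsMLP : ∀ (a b : ℕ), ((Fin a → ℝ) → (Fin b → ℝ)) → Prop
  | affine (a b : ℕ) (W : Fin b → Fin a → ℝ) (c : Fin b → ℝ) :
      IsMLP a b (fun x i => (∑ j, W i j * x j) + c i)
  | comp (a b c : ℕ) (f : (Fin a → ℝ) → (Fin b → ℝ)) (g : (Fin b → ℝ) → (Fin c → ℝ)) :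
      IsMLP a b f → IsMLP b c g →
      IsMLP a c (fun x => g (fun i => max (f x i) 0))

/-- GIN parameters `θ`: a depth `K`, layer dimensions, MLPs `MLP_0, …, MLP_K`, and reals
`ε^(1), …, ε^(K)`; the last layer has dimension `dOut`. -/
structure GINParams (dIn dOut : ℕ) where
  K : ℕ
  dims : ℕ → ℕ
  hdims : dims K = dOut
  mlp0 : (Fin dIn → ℝ) → (Fin (dims 0) → ℝ)
  mlp : (l : ℕ) → (Fin (dims l) → ℝ) → (Fin (dims (l + 1)) → ℝ)
  eps : ℕ → ℝ
  mlp0_spec : IsMLP dIn (dims 0) mlp0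
  mlp_spec : ∀ l, IsMLP (dims l) (dims (l + 1)) (mlp l)

open Classical in
/-- The GIN layer embeddings: `z_v^(0) = MLP_0(h_v)` and
`z_v^(l) = MLP_l((1 + ε^(l)) z_v^(l−1) + ∑_{u ∈ N(v)} z_u^(l−1))`. -/
noncomputable def GINemb {dIn dOut : ℕ} (θ : GINParams dIn dOut) {V : Type} [Fintype V]
    (G : SimpleGraph V) (h : V → Fin dIn → ℝ) : (l : ℕ) → V → Fin (θ.dims l) → ℝ
  | 0 => fun v => θ.mlp0 (h v)
  | (l + 1) => fun v => θ.mlp l (fun i =>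
      (1 + θ.eps (l + 1)) * GINemb θ G h l v i +
        ∑ u ∈ G.neighborFinset v, GINemb θ G h l u i)

/-- The GIN output embeddings `z_v = z_v^(K)`. -/
noncomputable def GINout {dIn dOut : ℕ} (θ : GINParams dIn dOut) {V : Type} [Fintype V]
    (G : SimpleGraph V) (h : V → Fin dIn → ℝ) (v : V) : Fin dOut → ℝ :=
  fun i => GINemb θ G h θ.K v (Fin.cast θ.hdims.symm i)

/-- The type of level-`l` trees with labels in `A`. -/
def TreeT (A : Type) : ℕ → Type
  | 0 => A
  | (l + 1) => TreeT A l × Multiset (TreeT A l)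

open Classical in
/-- The level-`l` tree of `v` in `G` with vertex labels `a`:
`T(G, v, 0) = a_v` and `T(G, v, l) = (T(G, v, l−1), {T(G, u, l−1) : u ∈ N(v)})`
(the second component a multiset). -/
noncomputable def levelTree {V A : Type} [Fintype V] (G : SimpleGraph V) (a : V → A) :
    (l : ℕ) → V → TreeT A l
  | 0 => fun v => a v
  | (l + 1) => fun v =>
      (levelTree G a l v, (G.neighborFinset v).val.map (levelTree G a l))

/-- `N_L(v)`: the set of vertices at graph distance at most `L` from `v`
(including `v` itself). -/
def ballSet {V : Type} (G : SimpleGraph V) (v : V) (L : ℕ) : Set V :=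
  {u | G.edist v u ≤ (L : ℕ∞)}

/-- A matching of a graph `G`: a set `M` of edges of `G`, no two of which share a vertex. -/
def IsMatchingSet {V : Type} (G : SimpleGraph V) (M : Set (Sym2 V)) : Prop :=
  M ⊆ G.edgeSet ∧ ∀ e ∈ M, ∀ f ∈ M, e ≠ f → ∀ v : V, ¬(v ∈ e ∧ v ∈ f)

/-- `ν(G)`: the maximum cardinality of a matching of the finite graph `G`. -/
noncomputable def matchingNumber {V : Type} [Fintype V] (G : SimpleGraph V) : ℕ :=
  sSup {n : ℕ | ∃ M : Set (Sym2 V), IsMatchingSet G M ∧ M.ncard = n}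

open Classical in
/-- The probability, when labels `r : V → A` are sampled i.i.d. from the distribution `μ`
supported on the finite set `D ⊆ A` (joint law the product measure `μ^V`), that the
predicate `P` holds of the labeling. -/
noncomputable def probOver {V A : Type} [Fintype V] (D : Finset A) (μ : A → ℝ)
    (P : (V → A) → Prop) : ℝ :=
  ∑ r ∈ (Fintype.piFinset (fun _ : V => D)).filter P, ∏ v, μ (r v)

open Classical in
/-- The GIN output embeddings at `v` with input features `h_u = (deg u, r u)`, replaced
by the zero vector whenever there exist distinct `s, t ∈ N_L(v)` with `r s = r t`. -/
noncomputable def rginMatchEmb {V : Type} [Fintype V] {dO : ℕ} (θ : GINParams 2 dO)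
    (G : SimpleGraph V) (L : ℕ) (r : V → ℝ) (v : V) : Fin dO → ℝ :=
  if ∃ s ∈ ballSet G v L, ∃ t ∈ ballSet G v L, s ≠ t ∧ r s = r t then 0
  else GINout θ G (fun u => ![((G.neighborSet u).ncard : ℝ), r u]) v

/-- The edge set `F = {{u,v} ∈ E | ⟨z_u, z_v⟩ > 0.5}` computed from the (zeroed-out)
GIN embeddings `z`. -/
noncomputable def rginMatchOutput {V : Type} [Fintype V] {dO : ℕ} (θ : GINParams 2 dO)
    (G : SimpleGraph V) (L : ℕ) (r : V → ℝ) : Set (Sym2 V) :=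
  {e : Sym2 V | e ∈ G.edgeSet ∧ ∃ u v : V, e = s(u, v) ∧
    0.5 < ∑ i, rginMatchEmb θ G L r u i * rginMatchEmb θ G L r v i}

/-! ### GINs compute all functions of trees -/

namespace RGIN

/-- One hidden layer interpolates any prescribed values on a finite set of reals. In the induction
the new hinge is put between the largest point and all the others, so that it only affects the
former. -/
lemma exists_hinge (b : ℕ) (P : Finset ℝ) (y : ℝ → Fin b → ℝ) :
    ∃ (m : ℕ) (h : Fin m → ℝ) (c : Fin b → Fin m → ℝ) (c0 : Fin b → ℝ),
      ∀ x ∈ P, ∀ i, (∑ j, c i j * max (x - h j) 0) + c0 i = y x i := by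
  induction P using Finset.induction_on_max with
  | empty => exact ⟨0, fun _ => 0, fun _ _ => 0, fun _ => 0, by simp⟩
  | insert a s hs ih =>
    obtain ⟨m, h, c, c0, H⟩ := ih
    obtain ⟨t, hta, hts⟩ : ∃ t < a, ∀ x ∈ s, x ≤ t := by
      refine ⟨(insert (a - 1) s).max' (by simp), ?_, fun x hx => Finset.le_max' _ _ (by simp [hx])⟩
      rw [Finset.max'_lt_iff]
      intro x hx
      rcases Finset.mem_insert.1 hx with rfl | hx
      · linarith
      · exact hs x hx
    refine ⟨m + 1, Fin.cons t h, fun i => Fin.cons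
      ((y a i - ((∑ j, c i j * max (a - h j) 0) + c0 i)) / (a - t)) (c i), c0, ?_⟩
    intro x hx i
    rw [Fin.sum_univ_succ]
    simp only [Fin.cons_zero, Fin.cons_succ]
    rcases Finset.mem_insert.1 hx with rfl | hx
    · have h1 : 0 < x - t := by linarith
      rw [max_eq_left h1.le, div_mul_cancel₀ _ h1.ne']
      ring
    · have := hts x hx
      rw [max_eq_right (by linarith : x - t ≤ 0), mul_zero, zero_add]
      exact H x hx i

/-- An MLP that reads a single linear form `∑ w j * x j` can realise any function of it on a finite
set of values. -/
lemma exists_mlp {a b : ℕ} (w : Fin a → ℝ) (P : Finset ℝ) (y : ℝ → Fin b → ℝ) :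
    ∃ F : (Fin a → ℝ) → (Fin b → ℝ), IsMLP a b F ∧
      ∀ x, (∑ j, w j * x j) ∈ P → F x = y (∑ j, w j * x j) := by
  obtain ⟨m, h, c, c0, H⟩ := exists_hinge b P y
  refine ⟨_, IsMLP.comp a m b _ _ (IsMLP.affine a m (fun _ => w) (fun j => - h j))
    (IsMLP.affine m b c c0), fun x hx => ?_⟩
  funext i
  simpa [sub_eq_add_neg] using H _ hx i

/-- The trees that occur as `levelTree` of a graph of maximum degree at most `Δ` with labels
in `D`. -/
def Reach (D : Finset ℝ) (Δ : ℕ) : (l : ℕ) → Set (TreeT ℝ l)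
  | 0 => {x : ℝ | x ∈ D}
  | (l + 1) => {t : TreeT ℝ l × Multiset (TreeT ℝ l) |
      t.1 ∈ Reach D Δ l ∧ (∀ s ∈ t.2, s ∈ Reach D Δ l) ∧ t.2.card ≤ Δ}

open Classical in
lemma finite_multiset {X : Type} {S : Set X} (hS : S.Finite) (Δ : ℕ) :
    {m : Multiset X | (∀ s ∈ m, s ∈ S) ∧ m.card ≤ Δ}.Finite := by
  refine ((Multiset.powerset (Δ • hS.toFinset.val)).toFinset.finite_toSet).subset ?_
  rintro m ⟨h1, h2⟩
  simp only [Finset.mem_coe, Multiset.mem_toFinset, Multiset.mem_powerset]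
  rw [Multiset.le_iff_count]
  intro s
  by_cases hs : s ∈ m
  · have : Multiset.count s hS.toFinset.val = 1 :=
      Multiset.count_eq_one_of_mem hS.toFinset.nodup (by simpa using h1 s hs)
    rw [Multiset.count_nsmul, this, mul_one]
    exact (Multiset.count_le_card _ _).trans h2
  · simp [Multiset.count_eq_zero_of_notMem hs]

lemma reach_finite (D : Finset ℝ) (Δ : ℕ) : ∀ l, (Reach D Δ l).Finite
  | 0 => D.finite_toSet
  | (l + 1) => by
    refine ((reach_finite D Δ l).prod (finite_multiset (reach_finite D Δ l) Δ)).subset ?_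
    rintro ⟨t, m⟩ ⟨h1, h2, h3⟩
    exact ⟨h1, h2, h3⟩

lemma treeT_nonempty : ∀ l, Nonempty (TreeT ℝ l)
  | 0 => ⟨(0 : ℝ)⟩
  | (l + 1) => ⟨((treeT_nonempty l).some, 0)⟩

open Classical in
lemma levelTree_mem_reach {D : Finset ℝ} {Δ : ℕ} {V : Type} [Fintype V] (G : SimpleGraph V)
    (hG : ∀ w : V, (G.neighborSet w).ncard ≤ Δ) (r : V → ℝ) (hr : ∀ v, r v ∈ D) :
    ∀ l v, levelTree G r l v ∈ Reach D Δ l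
  | 0, v => hr v
  | (l + 1), v => by
    refine ⟨levelTree_mem_reach G hG r hr l v, ?_, ?_⟩
    · intro s hs
      obtain ⟨u, -, rfl⟩ := Multiset.mem_map.1 hs
      exact levelTree_mem_reach G hG r hr l u
    · have := hG v
      rw [← SimpleGraph.coe_neighborFinset, Set.ncard_coe_finset] at this
      simpa [levelTree] using this

/-- Aggregation is injective: with a transcendental base `τ`, the number
`(Δ + 1) τ ^ idx t + ∑ τ ^ idx s` determines the pair `(t, m)`, because its coefficient at `idx t`
exceeds `Δ`, which is more than any multiplicity in `m`. -/
lemma aggregate_inj {X : Type} {S : Set X} {idx : X → ℕ} (hidx : Set.InjOn idx S) {τ : ℝ}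
    (hτ : Transcendental ℤ τ) {Δ : ℕ} {t t' : X} {m m' : Multiset X}
    (ht : t ∈ S) (ht' : t' ∈ S) (hm : ∀ s ∈ m, s ∈ S) (hm' : ∀ s ∈ m', s ∈ S)
    (hc' : m'.card ≤ Δ)
    (h : ((Δ : ℝ) + 1) * τ ^ idx t + (m.map (fun s => τ ^ idx s)).sum =
      ((Δ : ℝ) + 1) * τ ^ idx t' + (m'.map (fun s => τ ^ idx s)).sum) : t = t' ∧ m = m' := by
  classical
  let pol : X → Multiset X → Polynomial ℤ := fun t m =>
    ((Δ : Polynomial ℤ) + 1) * Polynomial.X ^ idx t + (m.map (fun s => Polynomial.X ^ idx s)).sum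
  have hev : ∀ t m, Polynomial.aeval τ (pol t m) =
      ((Δ : ℝ) + 1) * τ ^ idx t + (m.map (fun s => τ ^ idx s)).sum := by
    intro t m
    simp [pol, map_multiset_sum, Multiset.map_map]
  have hpol : pol t m = pol t' m' :=
    transcendental_iff_injective.1 hτ (by rw [hev, hev, h])
  have hcoef : ∀ t m i, (pol t m).coeff i =
      (if i = idx t then ((Δ : ℤ) + 1) else 0) + ((m.map idx).count i : ℤ) := by
    intro t m i
    have h1 : (((Δ : Polynomial ℤ) + 1) * Polynomial.X ^ idx t).coeff i =
        if i = idx t then ((Δ : ℤ) + 1) else 0 := by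
      have : ((Δ : Polynomial ℤ) + 1) = Polynomial.C ((Δ : ℤ) + 1) := by simp
      rw [this, Polynomial.coeff_C_mul_X_pow]
    have h2 : ((m.map (fun s => (Polynomial.X : Polynomial ℤ) ^ idx s)).sum).coeff i =
        ((m.map idx).count i : ℤ) := by
      induction m using Multiset.induction_on with
      | empty => simp
      | cons a m ih =>
        rw [Multiset.map_cons, Multiset.sum_cons, Polynomial.coeff_add, ih, Multiset.map_cons,
          Multiset.count_cons, Polynomial.coeff_X_pow]
        push_cast
        ring
    rw [Polynomial.coeff_add, h1, h2]
  have key : ∀ i, (if i = idx t then ((Δ : ℤ) + 1) else 0) + ((m.map idx).count i : ℤ) =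
      (if i = idx t' then ((Δ : ℤ) + 1) else 0) + ((m'.map idx).count i : ℤ) := by
    intro i; rw [← hcoef, ← hcoef, hpol]
  have htt : idx t = idx t' := by
    by_contra hne
    have h1 := key (idx t)
    have h2 : (m'.map idx).count (idx t) ≤ Δ :=
      (Multiset.count_le_card _ _).trans (by simpa using hc')
    rw [if_pos rfl, if_neg hne] at h1
    omega
  refine ⟨hidx ht ht' htt, ?_⟩
  have hmap : m.map idx = m'.map idx := by
    ext i
    have := key i
    rw [htt] at this
    exact_mod_cast add_left_cancel this
  obtain ⟨g, hg⟩ : ∃ g : ℕ → X, ∀ s ∈ S, g (idx s) = s := by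
    rcases isEmpty_or_nonempty X with hX | hX
    · exact (hX.false t).elim
    · exact ⟨Function.invFunOn idx S, fun s hs => hidx.leftInvOn_invFunOn hs⟩
  have : ∀ m : Multiset X, (∀ s ∈ m, s ∈ S) → (m.map idx).map g = m := by
    intro m hm
    rw [Multiset.map_map]
    conv_rhs => rw [← Multiset.map_id m]
    exact Multiset.map_congr rfl (fun s hs => hg s (hm s hs))
  rw [← this m hm, hmap, this m' hm']

open Classical in
/-- A GIN can compute any function of the level-`K` tree, on all graphs of maximum degree at
most `Δ` with labels in the finite set `D`. -/
theorem exists_gin (D : Finset ℝ) (Δ : ℕ) (d : ℕ) (K : ℕ)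
    (Φ : TreeT ℝ K → Fin (d + 1) → ℝ) :
    ∃ θ : GINParams 2 (d + 1), ∀ (V : Type) [Fintype V] (G : SimpleGraph V),
      (∀ w : V, (G.neighborSet w).ncard ≤ Δ) → ∀ r : V → ℝ, (∀ v, r v ∈ D) → ∀ v,
        GINout θ G (fun u => ![((G.neighborSet u).ncard : ℝ), r u]) v =
          Φ (levelTree G r K v) := by
  obtain ⟨τ, hτ⟩ : ∃ τ : ℝ, Transcendental ℤ τ :=
    ⟨_, transcendental_liouvilleNumber (le_refl 2)⟩
  have hidx : ∀ l, ∃ idx : TreeT ℝ l → ℕ, Set.InjOn idx (Reach D Δ l) := fun l =>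
    Set.countable_iff_exists_injOn.1 (reach_finite D Δ l).countable
  choose idx hidx using hidx
  -- below the last level a tree is transmitted as the constant vector `τ ^ idx`, and at the last
  -- level it is replaced by its value under `Φ`
  let tgt : ∀ l, TreeT ℝ l → Fin (d + 1) → ℝ := fun l t =>
    if h : l = K then Φ (h ▸ t) else fun _ => τ ^ idx l t
  -- with `ε = Δ` this is what each coordinate holds after aggregation
  let val : ∀ l, TreeT ℝ (l + 1) → ℝ := fun l t =>
    ((Δ : ℝ) + 1) * τ ^ idx l t.1 + (t.2.map (fun s => τ ^ idx l s)).sum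
  have hval : ∀ l, Set.InjOn (val l) (Reach D Δ (l + 1)) := by
    rintro l ⟨t, m⟩ ⟨h1, h2, -⟩ ⟨t', m'⟩ ⟨h1', h2', h3'⟩ h
    obtain ⟨rfl, rfl⟩ := aggregate_inj (hidx l) hτ h1 h1' h2 h2' h3' h
    rfl
  obtain ⟨F0, hF0, hF0'⟩ := exists_mlp (a := 2) ![0, 1] D (fun z : ℝ => tgt 0 z)
  have hstep : ∀ l, ∃ F : (Fin (d + 1) → ℝ) → (Fin (d + 1) → ℝ), IsMLP (d + 1) (d + 1) F ∧
      ∀ x t, t ∈ Reach D Δ (l + 1) → x 0 = val l t → F x = tgt (l + 1) t := by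
    intro l
    have hfin := (reach_finite D Δ (l + 1)).image (val l)
    have := treeT_nonempty (l + 1)
    obtain ⟨F, hF, hF'⟩ := exists_mlp (a := d + 1) (Pi.single 0 1) hfin.toFinset
      (fun z => tgt (l + 1) (Function.invFunOn (val l) (Reach D Δ (l + 1)) z))
    refine ⟨F, hF, fun x t ht hx => ?_⟩
    have hs : ∑ j, (Pi.single 0 1 : Fin (d + 1) → ℝ) j * x j = val l t := by
      rw [← hx]; simp [Pi.single_apply]
    rw [hF' x (by rw [hs]; simpa using ⟨t, ht, rfl⟩), hs,
      (hval l).leftInvOn_invFunOn ht]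
  choose F hF hF' using hstep
  let θ : GINParams 2 (d + 1) :=
    { K := K, dims := fun _ => d + 1, hdims := rfl, mlp0 := F0, mlp := F, eps := fun _ => Δ,
      mlp0_spec := hF0, mlp_spec := hF }
  refine ⟨θ, fun V _ G hG r hr v => ?_⟩
  have main : ∀ l, l ≤ K → ∀ v, GINemb θ G
      (fun u => ![((G.neighborSet u).ncard : ℝ), r u]) l v = tgt l (levelTree G r l v) := by
    intro l
    induction l with
    | zero =>
      intro _ v
      have := hF0' ![((G.neighborSet v).ncard : ℝ), r v] (by simpa using hr v)
      simp only [Fin.sum_univ_two, Matrix.cons_val_zero, Matrix.cons_val_one, zero_mul, one_mul,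
        zero_add] at this
      exact this
    | succ l ih =>
      intro hl v
      refine hF' l _ _ (levelTree_mem_reach G hG r hr (l + 1) v) ?_
      have hlt : ∀ u i, GINemb θ G (fun u => ![((G.neighborSet u).ncard : ℝ), r u]) l u i =
          τ ^ idx l (levelTree G r l u) := by
        intro u i
        rw [ih (by omega) u]
        simp [tgt, show l ≠ K by omega]
      have : ∀ u, GINemb θ G (fun u => ![((G.neighborSet u).ncard : ℝ), r u]) l u (0 : Fin (d+1)) =
          τ ^ idx l (levelTree G r l u) := fun u => hlt u _
      simp only [this]
      simp only [val, levelTree, Multiset.map_map, θ]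
      rw [add_comm (1 : ℝ)]
      rfl
  funext i
  have := congrFun (main K le_rfl v) i
  simp only [tgt, dif_pos] at this
  exact this

end RGIN

/-! ### Local functions -/

namespace RGIN

/-- Functions assigning to every vertex of every labelled finite graph a value in `X`. -/
abbrev VFun (X : Type) : Type 1 :=
  ∀ (V : Type) [Fintype V] (_ : SimpleGraph V) (_ : V → ℝ), V → X

/-- `f` is local if `f v` is determined by the level-`l` tree of `v`, for some fixed `l`. -/
def Loc {X : Type} (f : VFun X) : Prop :=
  ∃ (l : ℕ) (Φ : TreeT ℝ l → X), ∀ (V : Type) [Fintype V] (G : SimpleGraph V) (r : V → ℝ) (v : V),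
    f V G r v = Φ (levelTree G r l v)

variable {X Y : Type}

lemma Loc.label : Loc (fun _ _ _ r v => r v) := ⟨0, fun t => t, fun _ _ _ _ _ => rfl⟩

lemma Loc.map {f : VFun X} (F : X → Y) (hf : Loc f) : Loc (fun V _ G r v => F (f V G r v)) := by
  obtain ⟨l, Φ, h⟩ := hf
  exact ⟨l, fun t => F (Φ t), fun V _ G r v => congrArg F (h V G r v)⟩

lemma Loc.const (x : X) : Loc (fun _ _ _ _ _ => x) := Loc.label.map (fun _ => x)

/-- A local function factors through the trees of every sufficiently high level. -/
lemma Loc.lift {f : VFun X} {l m : ℕ} {Φ : TreeT ℝ l → X}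
    (h : ∀ (V : Type) [Fintype V] (G : SimpleGraph V) (r : V → ℝ) (v : V),
      f V G r v = Φ (levelTree G r l v)) (hm : l ≤ m) :
    ∃ Ψ : TreeT ℝ m → X, ∀ (V : Type) [Fintype V] (G : SimpleGraph V) (r : V → ℝ) (v : V),
      f V G r v = Ψ (levelTree G r m v) := by
  induction m, hm using Nat.le_induction with
  | base => exact ⟨Φ, h⟩
  | succ k _ ih =>
    obtain ⟨Ψ, hΨ⟩ := ih
    exact ⟨fun t => Ψ t.1, fun V _ G r v => hΨ V G r v⟩

lemma Loc.map₂ {Z : Type} {f : VFun X} {g : VFun Y} (F : X → Y → Z) (hf : Loc f) (hg : Loc g) :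
    Loc (fun V _ G r v => F (f V G r v) (g V G r v)) := by
  obtain ⟨l, Φ, h⟩ := hf
  obtain ⟨l', Φ', h'⟩ := hg
  obtain ⟨Ψ, hΨ⟩ := Loc.lift h (le_max_left l l')
  obtain ⟨Ψ', hΨ'⟩ := Loc.lift h' (le_max_right l l')
  exact ⟨max l l', fun t => F (Ψ t) (Ψ' t),
    fun V _ G r v => congrArg₂ F (hΨ V G r v) (hΨ' V G r v)⟩

open Classical in
/-- Collecting the values at the neighbours costs one more level. -/
lemma Loc.nbr {f : VFun X} (hf : Loc f) :
    Loc (fun V _ G r v => ((G.neighborFinset v).val.map (f V G r) : Multiset X)) := by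
  obtain ⟨l, Φ, h⟩ := hf
  refine ⟨l + 1, fun t => t.2.map Φ, fun V _ G r v => ?_⟩
  simp only [levelTree, Multiset.map_map]
  exact Multiset.map_congr rfl (fun u _ => h V G r u)

lemma Loc.exists_nbr {P : VFun Prop} (hP : Loc P) :
    Loc (fun V _ G r v => ∃ u, G.Adj v u ∧ P V G r u) := by
  classical
  have := hP.nbr.map (fun m => True ∈ m)
  convert this using 7 with V _ G r v
  simp [eq_comm]

lemma Loc.exists_lt {P : ℕ → VFun Prop} (n : ℕ) (hP : ∀ i < n, Loc (P i)) :
    Loc (fun V _ G r v => ∃ i < n, P i V G r v) := by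
  induction n with
  | zero => simpa using Loc.const False
  | succ n ih =>
    have := (ih (fun i hi => hP i (by omega))).map₂ Or (hP n (by omega))
    convert this using 6 with V _ G r v
    simp only [Nat.lt_succ_iff_lt_or_eq, or_and_right, exists_or, exists_eq_left]

/-- Existence of a walk `x 0, …, x n` ending in `v` with prescribed local properties. -/
lemma Loc.walk {P : ℕ → VFun Prop} (hP : ∀ i, Loc (P i)) (n : ℕ) :
    Loc (fun V _ G r v => ∃ x : ℕ → V, x n = v ∧ (∀ t ≤ n, P t V G r (x t)) ∧
      ∀ t < n, G.Adj (x t) (x (t + 1))) := by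
  induction n with
  | zero =>
    convert hP 0 using 6 with V _ G r v
    constructor
    · rintro ⟨x, rfl, h, -⟩
      exact h 0 le_rfl
    · intro h
      exact ⟨fun _ => v, rfl, fun t ht => by rwa [Nat.le_zero.1 ht], by simp⟩
  | succ n ih =>
    convert (hP (n + 1)).map₂ And ih.exists_nbr using 6 with V _ G r v
    constructor
    · rintro ⟨x, rfl, h, ha⟩
      exact ⟨h _ le_rfl, x n, (ha n (by omega)).symm, x, rfl, fun t ht => h t (by omega),
        fun t ht => ha t (by omega)⟩
    · rintro ⟨hv, u, hu, x, rfl, h, ha⟩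
      refine ⟨fun t => if t ≤ n then x t else v, by simp, fun t ht => ?_, fun t ht => ?_⟩
      · by_cases h' : t ≤ n
        · simpa [h'] using h t h'
        · obtain rfl : t = n + 1 := by omega
          simpa using hv
      · by_cases h' : t < n
        · simpa [h'.le, Nat.succ_le_of_lt h'] using ha t h'
        · obtain rfl : t = n := by omega
          simpa using hu.symm

/-- Existence of a walk `x 0, …, x n` through `v` at time `i` with prescribed local properties. -/
lemma Loc.walk_through {P : ℕ → VFun Prop} (hP : ∀ i, Loc (P i)) (n i : ℕ) (hi : i ≤ n) :
    Loc (fun V _ G r v => ∃ x : ℕ → V, x i = v ∧ (∀ t ≤ n, P t V G r (x t)) ∧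
      ∀ t < n, G.Adj (x t) (x (t + 1))) := by
  convert (Loc.walk hP i).map₂ And
    (Loc.walk (P := fun t => P (n - t)) (fun t => hP (n - t)) (n - i)) using 6 with V _ G r v
  constructor
  · rintro ⟨x, rfl, h, ha⟩
    refine ⟨⟨x, rfl, fun t ht => h t (by omega), fun t ht => ha t (by omega)⟩,
      fun t => x (n - t), by simp [Nat.sub_sub_self hi], fun t ht => h _ (by omega), fun t ht => ?_⟩
    have := ha (n - (t + 1)) (by omega)
    rw [show n - (t + 1) + 1 = n - t by omega] at this
    exact this.symm
  · rintro ⟨⟨x, rfl, h, ha⟩, y, hy, h', ha'⟩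
    refine ⟨fun t => if t ≤ i then x t else y (n - t), by simp, fun t ht => ?_, fun t ht => ?_⟩
    · by_cases hti : t ≤ i
      · simpa [hti] using h t hti
      · have := h' (n - t) (by omega)
        rw [show n - (n - t) = t by omega] at this
        simpa [hti] using this
    · by_cases hti : t < i
      · simpa [hti.le, Nat.succ_le_of_lt hti] using ha t hti
      · have := ha' (n - (t + 1)) (by omega)
        rw [show n - (t + 1) + 1 = n - t by omega] at this
        by_cases hti' : t = i
        · subst hti'
          rw [hy] at this
          simpa using this.symm
        · simpa [show ¬ t ≤ i by omega, show ¬ t + 1 ≤ i by omega] using this.symm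

end RGIN

/-! ### Augmentation along the occurrences of a word -/

namespace RGIN

/-- On a path with vertices `0, …, 2 j + 1`, the partner of `i` in the perfect matching
`{0, 1}, {2, 3}, …` that an augmentation installs. -/
def alpha (i : ℕ) : ℕ := if Even i then i + 1 else i - 1

/-- On a path with vertices `0, …, n`, where `n` is odd, the partner of `i` in the matching
`{1, 2}, {3, 4}, …` present before an augmentation; the two ends, being unmatched, are sent to
themselves. -/
def beta (n i : ℕ) : ℕ := if i = 0 ∨ i = n then i else if Even i then i - 1 else i + 1

lemma alpha_le {j i : ℕ} (hi : i ≤ 2 * j + 1) : alpha i ≤ 2 * j + 1 := by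
  unfold alpha; split_ifs with h <;> grind

lemma alpha_alpha (i : ℕ) : alpha (alpha i) = i := by
  unfold alpha; grind

lemma alpha_ne (i : ℕ) : alpha i ≠ i := by
  unfold alpha; grind

lemma beta_le {j i : ℕ} (hi : i ≤ 2 * j + 1) : beta (2 * j + 1) i ≤ 2 * j + 1 := by
  unfold beta; split_ifs <;> grind

section
variable {V : Type} (G : SimpleGraph V) (r : V → ℝ)

/-- The labels at distance at most `1` from `v` are distinct, so that a neighbour of `v` is
determined by its label. -/
def Good1 (v : V) : Prop := Set.InjOn r (insert v (G.neighborSet v))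

/-- An occurrence of the word `w 0, …, w (2 j + 1)`: a path `x 0, …, x (2 j + 1)` with these labels
that is augmenting for the matching `q`. Here and below a matching is encoded by the function `q`
that gives the label of the partner of each matched vertex, and the own label `r v` of each
unmatched vertex `v`. Only the first `2 j + 2` values of `w` and `x` matter. -/
structure Occ (q : V → ℝ) (j : ℕ) (w : ℕ → ℝ) (x : ℕ → V) : Prop where
  inj : Set.InjOn w (Set.Iic (2 * j + 1))
  good : ∀ i ≤ 2 * j + 1, Good1 G r (x i)
  lab : ∀ i ≤ 2 * j + 1, r (x i) = w i
  par : ∀ i ≤ 2 * j + 1, q (x i) = w (beta (2 * j + 1) i)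
  adj : ∀ i < 2 * j + 1, G.Adj (x i) (x (i + 1))

/-- `v` lies on an occurrence of the word `W = (j, w)`. -/
def InOcc (q : V → ℝ) (W : ℕ × (ℕ → ℝ)) (v : V) : Prop :=
  ∃ i < 2 * W.1 + 2, ∃ x, x i = v ∧ Occ G r q W.1 W.2 x

open Classical in
/-- The label of the new partner of a vertex labelled `z` on an occurrence of `W`; it depends on `z`
only, because the letters of a word that occurs are distinct. -/
noncomputable def newLabel (W : ℕ × (ℕ → ℝ)) (z : ℝ) : ℝ :=
  if h : ∃ i ≤ 2 * W.1 + 1, W.2 i = z then W.2 (alpha h.choose) else z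

lemma newLabel_apply {W : ℕ × (ℕ → ℝ)} (hW : Set.InjOn W.2 (Set.Iic (2 * W.1 + 1))) {i : ℕ}
    (hi : i ≤ 2 * W.1 + 1) : newLabel W (W.2 i) = W.2 (alpha i) := by
  have h : ∃ i' ≤ 2 * W.1 + 1, W.2 i' = W.2 i := ⟨i, hi, rfl⟩
  rw [newLabel, dif_pos h, hW h.choose_spec.1 hi h.choose_spec.2]

open Classical in
/-- Simultaneous augmentation of the matching `q` along all occurrences of the word `W`. -/
noncomputable def step (q : V → ℝ) (W : ℕ × (ℕ → ℝ)) (v : V) : ℝ :=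
  if InOcc G r q W v then newLabel W (r v) else q v

/-- The matching obtained from the empty one by augmenting along the words `Ws 0, Ws 1, …`. -/
noncomputable def alg (Ws : ℕ → ℕ × (ℕ → ℝ)) : ℕ → V → ℝ
  | 0 => r
  | m + 1 => step G r (alg Ws m) (Ws m)

/-- `q` encodes a matching. -/
def Inv (q : V → ℝ) : Prop := ∀ v, q v = r v ∨
  (Good1 G r v ∧ ∃ u, G.Adj v u ∧ Good1 G r u ∧ r u = q v ∧ q u = r v)

variable {G r} {q : V → ℝ}

lemma Good1.ne {v u : V} (h : Good1 G r v) (hu : G.Adj v u) : r u ≠ r v := fun e =>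
  hu.ne' (h (Or.inr hu) (Or.inl rfl) e)

lemma Good1.eq {v u u' : V} (h : Good1 G r v) (hu : G.Adj v u) (hu' : G.Adj v u')
    (e : r u = r u') : u = u' := h (Or.inr hu) (Or.inr hu') e

/-- Two occurrences of the same word sharing the vertex at position `i` coincide. -/
lemma Occ.unique {j : ℕ} {w : ℕ → ℝ} {x y : ℕ → V} (hx : Occ G r q j w x) (hy : Occ G r q j w y)
    {i : ℕ} (hi : i ≤ 2 * j + 1) (hxy : x i = y i) : ∀ t ≤ 2 * j + 1, x t = y t := by
  have up : ∀ t, i ≤ t → t ≤ 2 * j + 1 → x t = y t := by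
    intro t ht
    induction t, ht using Nat.le_induction with
    | base => exact fun _ => hxy
    | succ t _ ih =>
      intro htn
      have e := ih (by omega)
      refine (hx.good t (by omega)).eq (hx.adj t (by omega)) ?_ ?_
      · rw [e]; exact hy.adj t (by omega)
      · rw [hx.lab _ htn, hy.lab _ htn]
  have down : ∀ d t, t + d = i → x t = y t := by
    intro d
    induction d with
    | zero => rintro t rfl; exact hxy
    | succ d ih =>
      intro t ht
      have e := ih (t + 1) (by omega)
      refine (hx.good (t + 1) (by omega)).eq (hx.adj t (by omega)).symm ?_ ?_
      · rw [e]; exact (hy.adj t (by omega)).symm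
      · rw [hx.lab _ (by omega), hy.lab _ (by omega)]
  intro t ht
  rcases le_total i t with h | h
  · exact up t h ht
  · exact down (i - t) t (by omega)

lemma Occ.adj_alpha {j : ℕ} {w : ℕ → ℝ} {x : ℕ → V} (hx : Occ G r q j w x) {i : ℕ}
    (hi : i ≤ 2 * j + 1) : G.Adj (x i) (x (alpha i)) := by
  by_cases h : Even i
  · rw [alpha, if_pos h]; exact hx.adj i (by grind)
  · rw [alpha, if_neg h]
    have := hx.adj (i - 1) (by omega)
    rw [show i - 1 + 1 = i by grind] at this
    exact this.symm

lemma Occ.adj_beta {j : ℕ} {w : ℕ → ℝ} {x : ℕ → V} (hx : Occ G r q j w x) {i : ℕ}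
    (hi : i ≤ 2 * j + 1) (h0 : ¬ (i = 0 ∨ i = 2 * j + 1)) :
    G.Adj (x i) (x (beta (2 * j + 1) i)) := by
  rw [beta, if_neg h0]
  by_cases h : Even i
  · rw [if_pos h]
    have := hx.adj (i - 1) (by omega)
    rw [show i - 1 + 1 = i by omega] at this
    exact this.symm
  · rw [if_neg h]; exact hx.adj i (by omega)

lemma Occ.mem {W : ℕ × (ℕ → ℝ)} {x : ℕ → V} (hx : Occ G r q W.1 W.2 x) {i : ℕ}
    (hi : i ≤ 2 * W.1 + 1) : InOcc G r q W (x i) := ⟨i, by omega, x, rfl, hx⟩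

lemma Occ.step_apply {W : ℕ × (ℕ → ℝ)} {x : ℕ → V} (hx : Occ G r q W.1 W.2 x) {i : ℕ}
    (hi : i ≤ 2 * W.1 + 1) : step G r q W (x i) = W.2 (alpha i) := by
  rw [step, if_pos (hx.mem hi), hx.lab i hi, newLabel_apply hx.inj hi]

lemma step_of_not {W : ℕ × (ℕ → ℝ)} {v : V} (h : ¬ InOcc G r q W v) : step G r q W v = q v := by
  rw [step, if_neg h]

lemma Inv.init : Inv G r r := fun _ => Or.inl rfl

lemma Inv.step (hq : Inv G r q) (W : ℕ × (ℕ → ℝ)) : Inv G r (step G r q W) := by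
  intro v
  by_cases hv : InOcc G r q W v
  · obtain ⟨i, hi, x, rfl, hx⟩ := hv
    have hi : i ≤ 2 * W.1 + 1 := by omega
    have ha := alpha_le hi
    refine Or.inr ⟨hx.good i hi, x (alpha i), hx.adj_alpha hi, hx.good _ ha, ?_, ?_⟩
    · rw [hx.step_apply hi, hx.lab _ ha]
    · rw [hx.step_apply ha, alpha_alpha, hx.lab i hi]
  · rw [step_of_not hv]
    refine (hq v).imp_right ?_
    rintro ⟨hg, u, hadj, hgu, h1, h2⟩
    refine ⟨hg, u, hadj, hgu, h1, ?_⟩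
    -- the partner of a vertex on an occurrence lies on the same occurrence
    have hu : ¬ InOcc G r q W u := by
      rintro ⟨i, hi, x, rfl, hx⟩
      have hi : i ≤ 2 * W.1 + 1 := by omega
      by_cases h0 : i = 0 ∨ i = 2 * W.1 + 1
      · have := hx.par i hi
        rw [beta, if_pos h0, ← hx.lab i hi, h2] at this
        exact hg.ne hadj this.symm
      · have hb := beta_le hi
        have : v = x (beta (2 * W.1 + 1) i) :=
          hgu.eq hadj.symm (hx.adj_beta hi h0) (by rw [← h2, hx.par i hi, hx.lab _ hb])
        exact hv (this ▸ hx.mem hb)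
    rw [step_of_not hu, h2]

lemma alg_inv (Ws : ℕ → ℕ × (ℕ → ℝ)) (m : ℕ) : Inv G r (alg G r Ws m) := by
  induction m with
  | zero => exact Inv.init
  | succ m ih => exact ih.step _

end

section count
open Classical
variable {V : Type} [Fintype V] {G : SimpleGraph V} {r : V → ℝ} {q : V → ℝ}

/-- The unmatched vertices. -/
noncomputable def free (r q : V → ℝ) : Finset V := Finset.univ.filter (fun v => q v = r v)

lemma free_step (W : ℕ × (ℕ → ℝ)) : free r (step G r q W) ⊆ free r q := by
  intro v hv
  simp only [free, Finset.mem_filter, Finset.mem_univ, true_and] at hv ⊢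
  by_cases h : InOcc G r q W v
  · obtain ⟨i, hi, x, rfl, hx⟩ := h
    have hi : i ≤ 2 * W.1 + 1 := by omega
    rw [hx.step_apply hi, hx.lab i hi] at hv
    exact absurd (hx.inj (alpha_le hi) hi hv) (alpha_ne i)
  · rwa [step_of_not h] at hv

/-- Each augmentation along a word of length `2 j + 2` touches at most `2 j + 2` vertices for
every vertex that it matches. -/
lemma card_inOcc (W : ℕ × (ℕ → ℝ)) :
    (Finset.univ.filter (InOcc G r q W)).card +
      (2 * W.1 + 2) * (free r (step G r q W)).card ≤ (2 * W.1 + 2) * (free r q).card := by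
  have hsub := free_step (r := r) (q := q) (G := G) W
  rw [← Finset.card_sdiff_add_card_eq_card hsub, mul_add]
  gcongr
  have : ∀ y, ∃ X : ℕ → V, (∃ x, x 0 = y ∧ Occ G r q W.1 W.2 x) →
      X 0 = y ∧ Occ G r q W.1 W.2 X := by
    intro y
    by_cases h : ∃ x, x 0 = y ∧ Occ G r q W.1 W.2 x
    · obtain ⟨x, hx⟩ := h
      exact ⟨x, fun _ => hx⟩
    · exact ⟨fun _ => y, fun h' => absurd h' h⟩
  choose X hX using this
  -- an occurrence is determined by its first vertex, which gets matched, so the pairs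
  -- (position, first vertex) cover all the vertices that are touched
  rw [show 2 * W.1 + 2 = (Finset.range (2 * W.1 + 2)).card by simp, ← Finset.card_product]
  refine Finset.card_le_card_of_surjOn (fun p => X p.2 p.1) ?_
  intro v hv
  obtain ⟨i, hi, x, rfl, hx⟩ : InOcc G r q W v := by simpa using hv
  obtain ⟨h0, hX'⟩ := hX (x 0) ⟨x, rfl, hx⟩
  refine ⟨(i, x 0), ?_, hX'.unique hx (Nat.zero_le _) h0 i (by omega)⟩
  have e0 : q (x 0) = r (x 0) := by
    rw [hx.par 0 (Nat.zero_le _), hx.lab 0 (Nat.zero_le _)]; simp [beta]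
  have e1 : step G r q W (x 0) ≠ r (x 0) := by
    rw [hx.step_apply (Nat.zero_le _), hx.lab 0 (Nat.zero_le _)]
    exact fun h => alpha_ne 0 (hx.inj (alpha_le (Nat.zero_le _)) (Nat.zero_le _) h)
  simp [free, e0, e1, hi]

end count

/-! ### Locality of the augmentation steps -/

lemma loc_good1 : Loc (fun _ _ G r v => Good1 G r v) := by
  classical
  convert (Loc.label.map₂ (fun (z : ℝ) (m : Multiset ℝ) => (z ::ₘ m).Nodup) Loc.label.nbr)
    using 6 with V _ G r v
  rw [Multiset.nodup_cons, Multiset.nodup_map_iff_inj_on (Finset.nodup _), Good1,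
    Set.injOn_insert (by simp)]
  simp only [Multiset.mem_map, Finset.mem_val, SimpleGraph.mem_neighborFinset, Set.mem_image,
    SimpleGraph.mem_neighborSet, Set.InjOn]
  grind

lemma loc_step {q : VFun ℝ} (hq : Loc q) (W : ℕ × (ℕ → ℝ)) :
    Loc (fun V _ G r v => step G r (q V G r) W v) := by
  classical
  have hP : ∀ i, Loc (fun V _ G r v => Set.InjOn W.2 (Set.Iic (2 * W.1 + 1)) ∧ Good1 G r v ∧
      r v = W.2 i ∧ q V G r v = W.2 (beta (2 * W.1 + 1) i)) := fun i =>
    (Loc.const _).map₂ And (loc_good1.map₂ And ((Loc.label.map (· = W.2 i)).map₂ And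
      (hq.map (· = W.2 (beta (2 * W.1 + 1) i)))))
  have hocc : Loc (fun V _ G r v => InOcc G r (q V G r) W v) := by
    refine Loc.exists_lt (2 * W.1 + 2) (fun i hi => ?_)
    convert Loc.walk_through hP (2 * W.1 + 1) i (by omega) using 8 with V _ G r v x
    refine and_congr_right fun _ => ?_
    constructor
    · intro h
      exact ⟨fun t ht => ⟨h.inj, h.good t ht, h.lab t ht, h.par t ht⟩, h.adj⟩
    · intro h
      exact ⟨(h.1 0 (Nat.zero_le _)).1, fun t ht => (h.1 t ht).2.1, fun t ht => (h.1 t ht).2.2.1,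
        fun t ht => (h.1 t ht).2.2.2, h.2⟩
  exact (hocc.map₂ Prod.mk (Loc.label.map₂ Prod.mk hq)).map
    (fun p => if p.1 then newLabel W p.2.1 else p.2.2)

lemma loc_alg (Ws : ℕ → ℕ × (ℕ → ℝ)) (m : ℕ) : Loc (fun _ _ G r v => alg G r Ws m v) := by
  induction m with
  | zero => exact Loc.label
  | succ m ih => exact loc_step ih (Ws m)

end RGIN

/-! ### Alternating walks for two matchings -/

namespace RGIN

section alt
variable {V : Type} (a b : V → V)

/-- The walk `x, a x, b (a x), …` alternating between two maps. -/
def sq (x : V) : ℕ → V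
  | 0 => x
  | i + 1 => if Even i then a (sq x i) else b (sq x i)

/-- The alternating walk from `x` moves in each of its first `n` steps. -/
def NoStop (x : V) (n : ℕ) : Prop := ∀ t < n, sq a b x (t + 1) ≠ sq a b x t

variable {a b}

lemma NoStop.mono {x : V} {m n : ℕ} (h : NoStop a b x n) (hm : m ≤ n) : NoStop a b x m :=
  fun t ht => h t (ht.trans_le hm)

lemma sq_even {x : V} {i : ℕ} (h : Even i) : sq a b x (i + 1) = a (sq a b x i) := by
  rw [sq, if_pos h]

lemma sq_odd {x : V} {i : ℕ} (h : ¬ Even i) : sq a b x (i + 1) = b (sq a b x i) := by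
  rw [sq, if_neg h]

lemma sq_inj (ha : Function.Involutive a) (hb : Function.Involutive b) (i : ℕ) :
    Function.Injective (fun x => sq a b x i) := by
  induction i with
  | zero => exact fun _ _ h => h
  | succ i ih =>
    intro x y h
    simp only at h
    by_cases hi : Even i
    · rw [sq_even hi, sq_even hi] at h; exact ih (ha.injective h)
    · rw [sq_odd hi, sq_odd hi] at h; exact ih (hb.injective h)

/-- Two alternating walks started at fixed points of `b` that have not stopped can only meet in
the same phase if they are equal. -/
lemma sq_same_parity (ha : Function.Involutive a) (hb : Function.Involutive b) {x y : V}
    (hx : b x = x) (i d : ℕ) (hd : Even d) (hy : NoStop a b y (i + d))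
    (h : sq a b x i = sq a b y (i + d)) : d = 0 ∧ x = y := by
  have h0 : x = sq a b y d := by
    induction i with
    | zero => rw [zero_add] at h; exact h
    | succ i ih =>
      refine ih (hy.mono (by omega)) ?_
      rw [show i + 1 + d = i + d + 1 by ring] at h
      by_cases hi : Even i
      · rw [sq_even hi, sq_even (hi.add hd)] at h; exact ha.injective h
      · rw [sq_odd hi, sq_odd (by grind)] at h; exact hb.injective h
  rcases Nat.eq_zero_or_pos d with rfl | hpos
  · exact ⟨rfl, h0⟩
  · -- otherwise the walk from `y` would have stopped just before reaching `x`
    exfalso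
    obtain ⟨e, rfl⟩ : ∃ e, d = e + 1 := ⟨d - 1, by omega⟩
    have he : ¬ Even e := by grind
    apply hy e (by omega)
    have h1 : sq a b y e = b x := by rw [h0, sq_odd he, hb]
    rw [h1, hx, h0]

/-- The alternating walk from a fixed point of `b` is a path as long as it has not stopped. For two
times of different parity one moves inwards from both ends, until the walk can no longer continue. -/
lemma sq_distinct (ha : Function.Involutive a) (hb : Function.Involutive b) {x : V}
    (hx : b x = x) {n : ℕ} (hn : NoStop a b x n) :
    Set.InjOn (sq a b x) (Set.Iic n) := by
  have odd : ∀ d i, i + (2 * d + 1) ≤ n → sq a b x i ≠ sq a b x (i + (2 * d + 1)) := by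
    intro d
    induction d with
    | zero => intro i hi h; exact hn i (by omega) h.symm
    | succ d ih =>
      intro i hi h
      apply ih (i + 1) (by omega)
      rw [show i + (2 * (d + 1) + 1) = (i + 1 + (2 * d + 1)) + 1 by ring] at h
      by_cases he : Even i
      · rw [sq_even (show Even (i + 1 + (2 * d + 1)) by grind)] at h
        rw [sq_even he, h, ha]
      · rw [sq_odd (show ¬ Even (i + 1 + (2 * d + 1)) by grind)] at h
        rw [sq_odd he, h, hb]
  have lt : ∀ i j, i < j → j ≤ n → sq a b x i ≠ sq a b x j := by
    intro i j hij hj h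
    obtain ⟨d, rfl⟩ := Nat.exists_eq_add_of_le hij.le
    by_cases hd : Even d
    · have := sq_same_parity ha hb hx i d hd (hn.mono hj) h
      omega
    · obtain ⟨e, rfl⟩ := Nat.not_even_iff_odd.1 hd
      exact odd e i hj h
  intro i hi j hj h
  rcases lt_trichotomy i j with hij | hij | hij
  · exact absurd h (lt i j hij hj)
  · exact hij
  · exact absurd h.symm (lt j i hij hi)

open Classical in
/-- The starting points of augmenting paths with at most `2 k` vertices. -/
noncomputable def Aug [Fintype V] (a b : V → V) (k : ℕ) : Finset V :=
  Finset.univ.filter (fun x => b x = x ∧ ∃ j < k, NoStop a b x (2 * j + 1) ∧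
    b (sq a b x (2 * j + 1)) = sq a b x (2 * j + 1))

open Classical in
/-- If the matching `a` leaves far fewer vertices unmatched than the matching `b` does,
then there are many short augmenting paths for `b`. Matchings are given as involutions whose fixed
points are the unmatched vertices. -/
lemma card_aug [Fintype V] (ha : Function.Involutive a) (hb : Function.Involutive b) (k : ℕ) :
    k * (Finset.univ.filter (fun x => b x = x)).card ≤
      Fintype.card V + k * (Finset.univ.filter (fun x => a x = x)).card + k * (Aug a b k).card := by
  -- a vertex `x` free for `b` is also free for `a` (`S`), or its walk stops at another vertex free
  -- for `a` (`T`), or its walk is long (`L`), or its walk is a short augmenting path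
  set S : Finset V := Finset.univ.filter (fun x => a x = x ∧ b x = x)
  set B : Finset V := Finset.univ.filter (fun x => a x = x ∧ b x ≠ x)
  set L : Finset V := Finset.univ.filter (fun x => b x = x ∧ NoStop a b x (2 * k))
  set T : Finset V := Finset.univ.filter (fun x => b x = x ∧ a x ≠ x ∧
    ∃ i, NoStop a b x (2 * i) ∧ a (sq a b x (2 * i)) = sq a b x (2 * i))
  have hcov : Finset.univ.filter (fun x => b x = x) ⊆ S ∪ T ∪ L ∪ Aug a b k := by
    intro x hx
    simp only [Finset.mem_filter, Finset.mem_univ, true_and] at hx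
    simp only [Finset.mem_union, S, T, L, Aug, Finset.mem_filter, Finset.mem_univ, true_and, hx,
      and_true]
    by_cases h1 : a x = x
    · exact Or.inl (Or.inl (Or.inl h1))
    by_cases h2 : NoStop a b x (2 * k)
    · exact Or.inl (Or.inr h2)
    have hex : ∃ t, t < 2 * k ∧ sq a b x (t + 1) = sq a b x t := by
      simpa [NoStop] using h2
    have hns : NoStop a b x (Nat.find hex) := fun t ht h' =>
      Nat.find_min hex ht ⟨ht.trans (Nat.find_spec hex).1, h'⟩
    obtain ⟨hlt, hst⟩ := Nat.find_spec hex
    rcases Nat.even_or_odd' (Nat.find hex) with ⟨i, hi | hi⟩ <;> rw [hi] at hlt hst hns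
    · refine Or.inl (Or.inl (Or.inr ⟨h1, i, hns, ?_⟩))
      rwa [sq_even (by simp)] at hst
    · refine Or.inr ⟨i, by omega, hns, ?_⟩
      rwa [sq_odd (by simp)] at hst
  -- distinct walks end at distinct vertices
  have hT : T.card ≤ B.card := by
    choose! f hf using fun x (hx : x ∈ T) => (Finset.mem_filter.1 hx).2.2.2
    refine Finset.card_le_card_of_injOn (fun x => sq a b x (2 * f x)) ?_ ?_
    · intro x hx
      obtain ⟨-, hbx, hax, -⟩ := Finset.mem_filter.1 hx
      obtain ⟨h1, h2⟩ := hf x hx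
      simp only [B, Finset.coe_filter, Finset.mem_univ, true_and, Set.mem_ofPred_eq]
      refine ⟨h2, fun h3 => ?_⟩
      rcases Nat.eq_zero_or_pos (f x) with h0 | h0
      · rw [h0] at h2; exact hax h2
      · obtain ⟨e, he⟩ : ∃ e, f x = e + 1 := ⟨f x - 1, by omega⟩
        rw [he] at h1 h3
        apply h1 (2 * e + 1) (by omega)
        rw [show 2 * (e + 1) = 2 * e + 1 + 1 by ring, sq_odd (by simp), hb] at h3
        rw [sq_odd (by simp), ← h3]
    · have key : ∀ x ∈ T, ∀ y ∈ T, f x ≤ f y →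
          sq a b x (2 * f x) = sq a b y (2 * f y) → x = y := by
        intro x hx y hy hle h
        obtain ⟨d, hd⟩ := Nat.exists_eq_add_of_le hle
        have h1 := (hf y hy).1
        rw [hd, mul_add] at h h1
        exact (sq_same_parity ha hb (Finset.mem_filter.1 hx).2.1 _ _ (by simp) h1 h).2
      intro x hx y hy h
      rcases le_total (f x) (f y) with hle | hle
      · exact key x hx y hy hle h
      · exact (key y hy x hx hle h.symm).symm
  -- the even vertices of the long walks are distinct
  have hL : k * L.card ≤ Fintype.card V := by
    have : k * L.card = (Finset.range k ×ˢ L).card := by simp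
    rw [this, ← Finset.card_univ]
    refine Finset.card_le_card_of_injOn (fun p => sq a b p.2 (2 * p.1)) (by simp) ?_
    have key : ∀ s t x y, x ∈ L → y ∈ L → s ≤ t → t < k →
        sq a b x (2 * s) = sq a b y (2 * t) → s = t ∧ x = y := by
      intro s t x y hx hy hst ht h
      obtain ⟨d, rfl⟩ := Nat.exists_eq_add_of_le hst
      rw [mul_add] at h
      have := sq_same_parity ha hb (Finset.mem_filter.1 hx).2.1 _ _ (by simp)
        ((Finset.mem_filter.1 hy).2.2.mono (by omega)) h
      exact ⟨by omega, this.2⟩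
    rintro ⟨s, x⟩ hx ⟨t, y⟩ hy h
    simp only [Finset.coe_product, Set.mem_prod, Finset.mem_coe, Finset.mem_range] at hx hy h
    rcases le_total s t with hle | hle
    · obtain ⟨rfl, rfl⟩ := key s t x y hx.2 hy.2 hle hy.1 h
      rfl
    · obtain ⟨rfl, rfl⟩ := key t s y x hy.2 hx.2 hle hx.1 h.symm
      rfl
  have hA : (Finset.univ.filter (fun x => a x = x)).card = S.card + B.card := by
    rw [← Finset.card_union_of_disjoint]
    · congr 1; ext x; simp only [S, B, Finset.mem_filter, Finset.mem_union]; tauto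
    · rw [Finset.disjoint_left]; intro x; simp only [S, B, Finset.mem_filter]; tauto
  have h1 : (Finset.univ.filter (fun x => b x = x)).card ≤
      S.card + T.card + L.card + (Aug a b k).card :=
    (Finset.card_le_card hcov).trans ((Finset.card_union_le _ _).trans
      (Nat.add_le_add_right ((Finset.card_union_le _ _).trans
        (Nat.add_le_add_right (Finset.card_union_le _ _) _)) _))
  calc k * _ ≤ k * (S.card + B.card + L.card + (Aug a b k).card) := by
        apply Nat.mul_le_mul_left; omega
    _ = k * L.card + k * (S.card + B.card) + k * (Aug a b k).card := by ring
    _ ≤ _ := by rw [hA]; omega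

end alt

end RGIN

/-! ### Balls and matchings -/

namespace RGIN

lemma mem_ball_self {V : Type} (G : SimpleGraph V) (v : V) (L : ℕ) : v ∈ ballSet G v L := by
  simp [ballSet]

lemma mem_ball_succ {V : Type} {G : SimpleGraph V} {v u w : V} {L : ℕ} (h : u ∈ ballSet G v L)
    (huw : G.Adj u w) : w ∈ ballSet G v (L + 1) := by
  have h1 : G.edist u w = 1 := SimpleGraph.edist_eq_one_iff_adj.2 huw
  have h2 := G.edist_triangle (u := v) (v := u) (w := w)
  simp only [ballSet, Set.mem_ofPred_eq] at h ⊢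
  calc G.edist v w ≤ G.edist v u + G.edist u w := h2
    _ ≤ L + 1 := by rw [h1]; gcongr
    _ = ((L + 1 : ℕ) : ℕ∞) := by push_cast; rfl

lemma ball_mono {V : Type} {G : SimpleGraph V} {v : V} {L M : ℕ} (h : L ≤ M) :
    ballSet G v L ⊆ ballSet G v M := fun u (hu : G.edist v u ≤ L) =>
  show G.edist v u ≤ M from hu.trans (by exact_mod_cast h)

lemma ball_succ_subset {V : Type} {G : SimpleGraph V} {v : V} {L : ℕ} :
    ballSet G v (L + 1) ⊆ ⋃ u ∈ ballSet G v L, insert u (G.neighborSet u) := by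
  intro w hw
  have hne : G.edist v w ≠ ⊤ := ne_top_of_le_ne_top (ENat.natCast_ne_top (L + 1)) hw
  obtain ⟨p, hp⟩ := SimpleGraph.exists_walk_of_edist_ne_top hne
  have hlen : p.length ≤ L + 1 := by
    have : (p.length : ℕ∞) ≤ ((L + 1 : ℕ) : ℕ∞) := hp ▸ hw
    exact_mod_cast this
  simp only [Set.mem_iUnion, exists_prop]
  by_cases h : p.length = 0
  · obtain rfl := SimpleGraph.Walk.eq_of_length_eq_zero h
    exact ⟨v, mem_ball_self G v L, Or.inl rfl⟩
  · refine ⟨p.penultimate, ?_, Or.inr ?_⟩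
    · have := SimpleGraph.edist_le p.dropLast
      refine this.trans ?_
      have : p.dropLast.length ≤ L := by simp; omega
      exact_mod_cast this
    · exact p.adj_penultimate (fun hn => h (SimpleGraph.Walk.length_eq_zero_iff.2 hn))

lemma ball_card {V : Type} [Fintype V] {G : SimpleGraph V} {Δ : ℕ}
    (hG : ∀ w : V, (G.neighborSet w).ncard ≤ Δ) (v : V) (L : ℕ) :
    (ballSet G v L).ncard ≤ (Δ + 1) ^ L := by
  classical
  induction L with
  | zero =>
    have : ballSet G v 0 = {v} := by
      ext u
      simp only [ballSet, Set.mem_ofPred_eq, Nat.cast_zero, nonpos_iff_eq_zero,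
        SimpleGraph.edist_eq_zero_iff, Set.mem_singleton_iff]
      exact eq_comm
    simp [this]
  | succ L ih =>
    refine (Set.ncard_le_ncard ball_succ_subset (Set.toFinite _)).trans ?_
    have h1 : (⋃ u ∈ ballSet G v L, insert u (G.neighborSet u)) =
        (((ballSet G v L).toFinset.biUnion (fun u => (insert u (G.neighborSet u)).toFinset) :
          Finset V) : Set V) := by
      ext; simp
    rw [h1, Set.ncard_coe_finset, pow_succ]
    refine (Finset.card_biUnion_le_card_mul _ _ (Δ + 1) ?_).trans ?_
    · intro u _
      rw [← Set.ncard_eq_toFinset_card']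
      exact (Set.ncard_insert_le _ _).trans (Nat.add_le_add_right (hG u) 1)
    · rw [← Set.ncard_eq_toFinset_card']
      exact Nat.mul_le_mul_right _ ih

section matching
variable {V : Type} [Fintype V] {G : SimpleGraph V}

/-- The vertices covered by a set of edges. -/
def covered (M : Set (Sym2 V)) : Set V := {v | ∃ e ∈ M, v ∈ e}

lemma ncard_covered {M : Set (Sym2 V)} (hM : IsMatchingSet G M) :
    (covered M).ncard = 2 * M.ncard := by
  classical
  have h1 : covered M = ((M.toFinset.biUnion (fun e => e.toFinset) : Finset V) : Set V) := by
    ext v; simp [covered]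
  rw [h1, Set.ncard_coe_finset, Finset.card_biUnion, Set.ncard_eq_toFinset_card' M, mul_comm]
  · refine Finset.sum_const_nat fun e he => ?_
    exact Sym2.card_toFinset_of_not_isDiag e
      (G.not_isDiag_of_mem_edgeSet (hM.1 (Set.mem_toFinset.1 he)))
  · intro e he f hf hef
    change Disjoint _ _
    rw [Finset.disjoint_left]
    intro v hv hv'
    exact hM.2 e (by simpa using he) f (by simpa using hf) hef v
      ⟨by simpa using hv, by simpa using hv'⟩

lemma matching_bdd : BddAbove {n : ℕ | ∃ M : Set (Sym2 V), IsMatchingSet G M ∧ M.ncard = n} := by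
  refine ⟨(Set.univ : Set (Sym2 V)).ncard, ?_⟩
  rintro n ⟨M, -, rfl⟩
  exact Set.ncard_le_ncard (Set.subset_univ _) (Set.toFinite _)

lemma exists_max_matching (G : SimpleGraph V) :
    ∃ M : Set (Sym2 V), IsMatchingSet G M ∧ M.ncard = matchingNumber G := by
  have : ({n : ℕ | ∃ M : Set (Sym2 V), IsMatchingSet G M ∧ M.ncard = n}).Nonempty :=
    ⟨0, ∅, ⟨by simp, by simp⟩, by simp⟩
  exact Nat.sSup_mem this matching_bdd

lemma ncard_le_matchingNumber {M : Set (Sym2 V)} (hM : IsMatchingSet G M) :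
    M.ncard ≤ matchingNumber G := le_csSup matching_bdd ⟨M, hM, rfl⟩

open Classical in
/-- A maximum matching, as the involution exchanging the two ends of each of its edges. -/
lemma exists_max_involution (G : SimpleGraph V) :
    ∃ a : V → V, Function.Involutive a ∧ (∀ v, a v ≠ v → G.Adj v (a v)) ∧
      (Finset.univ.filter (fun v => a v = v)).card + 2 * matchingNumber G = Fintype.card V := by
  obtain ⟨M, hM, hc⟩ := exists_max_matching G
  have : ∀ v, ∃ u, (v ∈ covered M → s(v, u) ∈ M) ∧ (v ∉ covered M → u = v) := by
    intro v
    by_cases h : v ∈ covered M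
    · obtain ⟨e, he, hv⟩ := h
      obtain ⟨u, rfl⟩ := Sym2.mem_iff_exists.1 hv
      exact ⟨u, fun _ => he, fun h' => absurd ⟨_, he, hv⟩ h'⟩
    · exact ⟨v, fun h' => absurd h' h, fun _ => rfl⟩
  choose a ha1 ha2 using this
  have hadj : ∀ v, v ∈ covered M → G.Adj v (a v) := fun v hv => hM.1 (ha1 v hv)
  have huniq : ∀ v u u', s(v, u) ∈ M → s(v, u') ∈ M → u = u' := by
    intro v u u' h h'
    by_contra hne
    exact hM.2 _ h _ h' (fun e => hne (Sym2.congr_right.1 e)) v ⟨by simp, by simp⟩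
  have hfix : ∀ v, a v = v ↔ v ∉ covered M := fun v =>
    ⟨fun h hv => (hadj v hv).ne h.symm, ha2 v⟩
  refine ⟨a, fun v => ?_, fun v hv => hadj v (by_contra fun h => hv (ha2 v h)), ?_⟩
  · by_cases hv : v ∈ covered M
    · have h1 : s(a v, v) ∈ M := by rw [Sym2.eq_swap]; exact ha1 v hv
      exact huniq (a v) _ _ (ha1 (a v) ⟨_, h1, by simp⟩) h1
    · rw [ha2 v hv, ha2 v hv]
  · rw [← hc, ← ncard_covered hM, ← Set.ncard_coe_finset]
    have : ((Finset.univ.filter (fun v => a v = v) : Finset V) : Set V) = (covered M)ᶜ := by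
      ext v; simp [hfix]
    rw [this, add_comm, Set.ncard_add_ncard_compl, Nat.card_eq_fintype_card]

/-- The ends of a maximum matching are a dominating set in a connected graph with an edge, so `ν` is
at least a constant fraction of the number of vertices. -/
lemma card_le_matchingNumber {Δ : ℕ} (hc : G.Connected)
    (hG : ∀ w : V, (G.neighborSet w).ncard ≤ Δ) (h2 : 2 ≤ Fintype.card V) :
    Fintype.card V ≤ 2 * (Δ + 1) * matchingNumber G := by
  classical
  obtain ⟨M, hM, hcard⟩ := exists_max_matching G
  have hmax : ∀ u v, G.Adj u v → u ∈ covered M ∨ v ∈ covered M := by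
    intro u v huv
    by_contra! hcon
    obtain ⟨hu, hv⟩ := hcon
    have hnot : s(u, v) ∉ M := fun h => hu ⟨_, h, by simp⟩
    have hM' : IsMatchingSet G (insert s(u, v) M) := by
      refine ⟨Set.insert_subset huv hM.1, ?_⟩
      have key : ∀ f ∈ M, ∀ w, ¬ (w ∈ s(u, v) ∧ w ∈ f) := by
        rintro f hf w ⟨hw, hwf⟩
        rcases Sym2.mem_iff.1 hw with rfl | rfl
        · exact hu ⟨f, hf, hwf⟩
        · exact hv ⟨f, hf, hwf⟩
      rintro e (rfl | he) f (rfl | hf) hef w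
      · exact absurd rfl hef
      · exact key f hf w
      · exact fun h => key e he w h.symm
      · exact hM.2 e he f hf hef w
    have := ncard_le_matchingNumber hM'
    rw [Set.ncard_insert_of_notMem hnot (Set.toFinite _)] at this
    omega
  have hdom : (Finset.univ : Finset V) ⊆
      (covered M).toFinset.biUnion (fun u => (insert u (G.neighborSet u)).toFinset) := by
    intro v _
    simp only [Finset.mem_biUnion, Set.mem_toFinset]
    by_cases hv : v ∈ covered M
    · exact ⟨v, hv, Or.inl rfl⟩
    · have : Nontrivial V := Fintype.one_lt_card_iff_nontrivial.1 h2
      obtain ⟨u, hu⟩ := hc.preconnected.exists_adj_of_nontrivial v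
      exact ⟨u, (hmax v u hu).resolve_left hv, Or.inr hu.symm⟩
  have := (Finset.card_le_card hdom).trans (Finset.card_biUnion_le_card_mul _ _ (Δ + 1) (by
    intro u _
    rw [← Set.ncard_eq_toFinset_card']
    exact (Set.ncard_insert_le _ _).trans (Nat.add_le_add_right (hG u) 1)))
  rw [← Set.ncard_eq_toFinset_card', ncard_covered hM, hcard, Finset.card_univ] at this
  linarith

end matching

/-- The partner map of a state: an involution along edges that realises the labels `q`. -/
lemma Inv.exists_partner {V : Type} {G : SimpleGraph V} {r q : V → ℝ} (hq : Inv G r q) :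
    ∃ b : V → V, Function.Involutive b ∧ (∀ v, b v ≠ v → G.Adj v (b v)) ∧
      (∀ v, r (b v) = q v) ∧ ∀ v, b v = v ↔ q v = r v := by
  have : ∀ v, ∃ u, r u = q v ∧ q u = r v ∧ (u ≠ v → G.Adj v u ∧ Good1 G r v ∧ Good1 G r u) := by
    intro v
    rcases hq v with h | ⟨h1, u, h2, h3, h4, h5⟩
    · exact ⟨v, h.symm, h, fun h => absurd rfl h⟩
    · exact ⟨u, h4, h5, fun _ => ⟨h2, h1, h3⟩⟩
  choose b h1 h2 h3 using this
  have hfix : ∀ v, b v = v ↔ q v = r v := by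
    intro v
    constructor
    · intro h; rw [← h1, h]
    · intro h
      by_contra hne
      obtain ⟨ha, hg, -⟩ := h3 v hne
      exact hg.ne ha (by rw [h1, h])
  refine ⟨b, fun v => ?_, fun v hv => (h3 v hv).1, h1, hfix⟩
  by_cases hv : b v = v
  · rw [hv, hv]
  · obtain ⟨ha, hg, hg'⟩ := h3 v hv
    have hne : b (b v) ≠ b v := by
      rw [Ne, hfix, h2]
      exact fun h => hg.ne ha h.symm
    exact hg'.eq (h3 _ hne).1 ha.symm (by rw [h1, h2])

end RGIN

/-! ### Progress of the augmentations -/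

namespace RGIN

/-- A periodic sequence of words in which each period contains all words with letters in `D` and
length at most `2 k`. -/
lemma exists_words (D : Finset ℝ) (hD : D.Nonempty) (k : ℕ) (hk : 0 < k) :
    ∃ (Ws : ℕ → ℕ × (ℕ → ℝ)) (P : ℕ), (∀ m, (Ws m).1 < k) ∧
      ∀ t j (w : ℕ → ℝ), j < k → (∀ i, w i ∈ D) →
        ∃ m, t * P ≤ m ∧ m < (t + 1) * P ∧ (Ws m).1 = j ∧ ∀ i ≤ 2 * j + 1, (Ws m).2 i = w i := by
  classical
  let X := Fin k × (Fin (2 * k) → D)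
  have : Nonempty X := ⟨⟨⟨0, hk⟩, fun _ => ⟨hD.choose, hD.choose_spec⟩⟩⟩
  set P := Fintype.card X with hP
  have hP0 : 0 < P := Fintype.card_pos
  let e : X ≃ Fin P := Fintype.equivFin X
  let g : ℕ → X := fun m => e.symm ⟨m % P, Nat.mod_lt _ hP0⟩
  refine ⟨fun m => ((g m).1, fun i => if h : i < 2 * k then (g m).2 ⟨i, h⟩ else 0), P,
    fun m => (g m).1.2, ?_⟩
  intro t j w hj hw
  let y : X := (⟨j, hj⟩, fun i => ⟨w i, hw i⟩)
  have hlt := (e y).2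
  have hg : g (t * P + e y) = y := by
    have h1 : (t * P + (e y : ℕ)) % P = e y := by
      rw [Nat.mul_add_mod_self_right, Nat.mod_eq_of_lt hlt]
    simp only [g, h1, Fin.eta, Equiv.symm_apply_apply]
  refine ⟨t * P + e y, by omega, by rw [add_mul]; omega, by simp only [hg, y], ?_⟩
  intro i hi
  have hi' : i < 2 * k := by omega
  simp only [hg, y, dif_pos hi']

lemma Occ.congr {V : Type} {G : SimpleGraph V} {r q q' : V → ℝ} {j : ℕ} {w w' : ℕ → ℝ} {x : ℕ → V}
    (h : Occ G r q j w x) (hw : ∀ i ≤ 2 * j + 1, w' i = w i)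
    (hq : ∀ i ≤ 2 * j + 1, q' (x i) = q (x i)) : Occ G r q' j w' x where
  inj := h.inj.congr fun i hi => (hw i hi).symm
  good := h.good
  lab i hi := by rw [h.lab i hi, hw i hi]
  par i hi := by rw [hq i hi, h.par i hi, hw _ (beta_le hi)]
  adj := h.adj

/-- Every short augmenting path all of whose labels are distinct is an occurrence of a word. -/
lemma occ_of_aug {V : Type} {G : SimpleGraph V} {r q : V → ℝ} {a b : V → V} (ha : Function.Involutive a) (hb : Function.Involutive b)
    (haG : ∀ v, a v ≠ v → G.Adj v (a v)) (hbG : ∀ v, b v ≠ v → G.Adj v (b v))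
    (hq : ∀ v, r (b v) = q v) {x : V} {j k : ℕ} (hj : j < k) (hx : b x = x)
    (hn : NoStop a b x (2 * j + 1)) (he : b (sq a b x (2 * j + 1)) = sq a b x (2 * j + 1))
    (hgood : Set.InjOn r (ballSet G x (2 * k))) :
    Occ G r q j (fun i => r (sq a b x i)) (sq a b x) := by
  have hadj : ∀ i < 2 * j + 1, G.Adj (sq a b x i) (sq a b x (i + 1)) := by
    intro i hi
    have := hn i hi
    by_cases h : Even i
    · rw [sq_even h] at this ⊢; exact haG _ this
    · rw [sq_odd h] at this ⊢; exact hbG _ this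
  have hball : ∀ i ≤ 2 * j + 1, sq a b x i ∈ ballSet G x i := by
    intro i
    induction i with
    | zero => exact fun _ => mem_ball_self G x 0
    | succ i ih => exact fun hi => mem_ball_succ (ih (by omega)) (hadj i (by omega))
  refine ⟨?_, ?_, fun _ _ => rfl, ?_, hadj⟩
  · intro s hs t ht hst
    have hs' : s ≤ 2 * j + 1 := hs
    have ht' : t ≤ 2 * j + 1 := ht
    exact sq_distinct ha hb hx hn hs ht (hgood (ball_mono (by omega) (hball s hs'))
      (ball_mono (by omega) (hball t ht')) hst)
  · intro i hi
    refine hgood.mono ?_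
    rintro u (rfl | hu)
    · exact ball_mono (by omega) (hball i hi)
    · exact ball_mono (by omega) (mem_ball_succ (hball i hi) hu)
  · intro i hi
    simp only [← hq]
    congr 1
    unfold beta
    split_ifs with h0 h1
    · rcases h0 with rfl | rfl
      · exact hx
      · exact he
    · obtain ⟨i, rfl⟩ : ∃ i', i = i' + 1 := ⟨i - 1, by omega⟩
      rw [sq_odd (by grind), hb, Nat.add_sub_cancel]
    · rw [sq_odd h1]

section sweep
open Classical
variable {V : Type} [Fintype V] {G : SimpleGraph V} {r : V → ℝ}

/-- The vertices that are augmented during the steps `s, …, e - 1`. -/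
noncomputable def touched (G : SimpleGraph V) (r : V → ℝ) (Ws : ℕ → ℕ × (ℕ → ℝ)) (s e : ℕ) :
    Finset V :=
  Finset.univ.filter (fun v => ∃ m, s ≤ m ∧ m < e ∧ InOcc G r (alg G r Ws m) (Ws m) v)

lemma mem_touched {Ws : ℕ → ℕ × (ℕ → ℝ)} {s e : ℕ} {v : V} : v ∈ touched G r Ws s e ↔
    ∃ m, s ≤ m ∧ m < e ∧ InOcc G r (alg G r Ws m) (Ws m) v := by simp [touched]

/-- Summed over several steps, the number of touched vertices is at most `2 k` times the number of
vertices that become matched. -/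
lemma card_touched {Ws : ℕ → ℕ × (ℕ → ℝ)} {k : ℕ} (hk : ∀ m, (Ws m).1 < k) (s d : ℕ) :
    (touched G r Ws s (s + d)).card + 2 * k * (free r (alg G r Ws (s + d))).card ≤
      2 * k * (free r (alg G r Ws s)).card := by
  induction d with
  | zero =>
    have : touched G r Ws s s = ∅ := by
      ext v
      simp only [mem_touched, Finset.notMem_empty, iff_false]
      rintro ⟨m, h1, h2, -⟩
      omega
    simp [this]
  | succ d ih =>
    have hsub : touched G r Ws s (s + (d + 1)) ⊆ touched G r Ws s (s + d) ∪
        Finset.univ.filter (InOcc G r (alg G r Ws (s + d)) (Ws (s + d))) := by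
      intro v hv
      obtain ⟨m, h1, h2, h3⟩ := mem_touched.1 hv
      rcases eq_or_lt_of_le (show m ≤ s + d by omega) with rfl | h
      · exact Finset.mem_union_right _ (by simpa using h3)
      · exact Finset.mem_union_left _ (mem_touched.2 ⟨m, h1, h, h3⟩)
    have h1 := (Finset.card_le_card hsub).trans (Finset.card_union_le _ _)
    have h2 := card_inOcc (G := G) (r := r) (q := alg G r Ws (s + d)) (Ws (s + d))
    have h3 := Finset.card_le_card
      (free_step (G := G) (r := r) (q := alg G r Ws (s + d)) (Ws (s + d)))
    rw [show s + (d + 1) = s + d + 1 from rfl] at h1 ⊢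
    change _ + 2 * k * (free r (step G r (alg G r Ws (s + d)) (Ws (s + d)))).card ≤ _
    obtain ⟨c, hc⟩ := Nat.exists_eq_add_of_le h3
    have h4 : 2 * (Ws (s + d)).1 + 2 ≤ 2 * k := by have := hk (s + d); omega
    rw [hc] at h2 ih
    have h5 := Nat.mul_le_mul_right c h4
    rw [mul_add] at h2 ih
    omega

lemma alg_eq_of_not_touched {Ws : ℕ → ℕ × (ℕ → ℝ)} {s e m : ℕ} {v : V}
    (hv : v ∉ touched G r Ws s e) (hs : s ≤ m) (hm : m ≤ e) :
    alg G r Ws m v = alg G r Ws s v := by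
  induction m, hs using Nat.le_induction with
  | base => rfl
  | succ m h ih =>
    rw [← ih (by omega)]
    exact step_of_not fun h' => hv (mem_touched.2 ⟨m, h, by omega, h'⟩)

/-- The vertices that see a repeated label. -/
noncomputable def bad (G : SimpleGraph V) (r : V → ℝ) (L : ℕ) : Finset V :=
  Finset.univ.filter (fun v => ¬ Set.InjOn r (ballSet G v L))

variable {D : Finset ℝ} {Ws : ℕ → ℕ × (ℕ → ℝ)} {P k : ℕ}

/-- During one sweep through all words every short augmenting path present at the start is
met by some augmentation, unless it starts at a bad vertex. -/
lemma card_aug_le_touched (hr : ∀ v, r v ∈ D)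
    (hW : ∀ t j (w : ℕ → ℝ), j < k → (∀ i, w i ∈ D) →
      ∃ m, t * P ≤ m ∧ m < (t + 1) * P ∧ (Ws m).1 = j ∧ ∀ i ≤ 2 * j + 1, (Ws m).2 i = w i)
    {a b : V → V} (ha : Function.Involutive a) (hb : Function.Involutive b)
    (haG : ∀ v, a v ≠ v → G.Adj v (a v)) (hbG : ∀ v, b v ≠ v → G.Adj v (b v)) (t : ℕ)
    (hq : ∀ v, r (b v) = alg G r Ws (t * P) v) :
    (Aug a b k).card ≤ (bad G r (2 * k)).card +
      2 * k * (touched G r Ws (t * P) ((t + 1) * P)).card := by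
  set S := touched G r Ws (t * P) ((t + 1) * P) with hS
  have hsub : Aug a b k ⊆ bad G r (2 * k) ∪
      (Finset.range (2 * k)).biUnion (fun i => Finset.univ.filter (fun x => sq a b x i ∈ S)) := by
    intro x hx
    simp only [Aug, Finset.mem_filter, Finset.mem_univ, true_and] at hx
    obtain ⟨hx, j, hj, hn, he⟩ := hx
    simp only [Finset.mem_union, bad, Finset.mem_filter, Finset.mem_univ, true_and,
      Finset.mem_biUnion, Finset.mem_range]
    by_contra! hcon
    obtain ⟨hgood, hnot⟩ := hcon
    have hocc := occ_of_aug ha hb haG hbG hq hj hx hn he hgood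
    obtain ⟨m, hm1, hm2, hm3, hm4⟩ := hW t j (fun i => r (sq a b x i)) hj (fun i => hr _)
    have hocc' : Occ G r (alg G r Ws m) j (Ws m).2 (sq a b x) :=
      hocc.congr hm4 fun i hi => alg_eq_of_not_touched (hnot i (by omega)) hm1 hm2.le
    exact hnot 0 (by omega) (mem_touched.2 ⟨m, hm1, hm2, 0, by omega, _, rfl, hm3 ▸ hocc'⟩)
  refine (Finset.card_le_card hsub).trans ((Finset.card_union_le _ _).trans ?_)
  gcongr
  refine (Finset.card_biUnion_le_card_mul _ _ S.card fun i _ => ?_).trans (by simp)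
  exact Finset.card_le_card_of_injOn (fun x => sq a b x i) (by intro x hx; simpa using hx)
    (sq_inj ha hb i).injOn

/-- A sweep makes progress as long as there are many more unmatched vertices than in a maximum
matching: these produce many short augmenting paths, each of which is touched during the sweep,
and touching many vertices means matching many of them. -/
lemma sweep (hr : ∀ v, r v ∈ D) (hk : ∀ m, (Ws m).1 < k)
    (hW : ∀ t j (w : ℕ → ℝ), j < k → (∀ i, w i ∈ D) →
      ∃ m, t * P ≤ m ∧ m < (t + 1) * P ∧ (Ws m).1 = j ∧ ∀ i ≤ 2 * j + 1, (Ws m).2 i = w i)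
    (t : ℕ) :
    k * (free r (alg G r Ws (t * P))).card + 2 * k * matchingNumber G
        + 4 * k ^ 3 * (free r (alg G r Ws ((t + 1) * P))).card ≤
      Fintype.card V + k * Fintype.card V + k * (bad G r (2 * k)).card
        + 4 * k ^ 3 * (free r (alg G r Ws (t * P))).card := by
  obtain ⟨a, ha, haG, hfix⟩ := exists_max_involution G
  obtain ⟨b, hb, hbG, hq, hbfix⟩ := (alg_inv (G := G) (r := r) Ws (t * P)).exists_partner
  have h1 := card_aug_le_touched hr hW ha hb haG hbG t hq
  have h2 := card_aug ha hb k
  have h3 := card_touched (G := G) (r := r) hk (t * P) P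
  rw [← add_one_mul] at h3
  have h4 : (Finset.univ.filter (fun x => b x = x)) = free r (alg G r Ws (t * P)) := by
    ext v; simp [free, hbfix]
  rw [h4] at h2
  have h5 := Nat.mul_le_mul_left k h1
  have h6 := Nat.mul_le_mul_left (2 * k ^ 2) h3
  have h7 := congrArg (k * ·) hfix
  nlinarith

lemma free_anti {s e : ℕ} (h : s ≤ e) : free r (alg G r Ws e) ⊆ free r (alg G r Ws s) := by
  induction e, h using Nat.le_induction with
  | base => exact subset_rfl
  | succ e _ ih => exact (free_step _).trans ih

/-- After `T` sweeps the number of unmatched vertices is close to its minimum `n - 2 ν`: after division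
by `T k`, the errors are `n / k`, `4 k ^ 2 n / T` and the number of bad vertices. -/
lemma sweeps (hr : ∀ v, r v ∈ D) (hk : ∀ m, (Ws m).1 < k)
    (hW : ∀ t j (w : ℕ → ℝ), j < k → (∀ i, w i ∈ D) →
      ∃ m, t * P ≤ m ∧ m < (t + 1) * P ∧ (Ws m).1 = j ∧ ∀ i ≤ 2 * j + 1, (Ws m).2 i = w i)
    (T : ℕ) :
    T * (k * (free r (alg G r Ws (T * P))).card + 2 * k * matchingNumber G) ≤
      T * (Fintype.card V + k * Fintype.card V + k * (bad G r (2 * k)).card)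
        + 4 * k ^ 3 * Fintype.card V := by
  -- the term `4 k ^ 3 f` is the potential paying for the progress of the sweeps
  have key : T * (k * (free r (alg G r Ws (T * P))).card + 2 * k * matchingNumber G)
      + 4 * k ^ 3 * (free r (alg G r Ws (T * P))).card ≤
      T * (Fintype.card V + k * Fintype.card V + k * (bad G r (2 * k)).card)
        + 4 * k ^ 3 * Fintype.card V := by
    induction T with
    | zero =>
      simp only [zero_mul, zero_add]
      gcongr
      exact Finset.card_le_univ _
    | succ T ih =>
      have h1 := sweep (G := G) hr hk hW T
      have h2 := Finset.card_le_card (free_anti (G := G) (r := r) (Ws := Ws)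
        (show T * P ≤ (T + 1) * P by gcongr; omega))
      have h3 := Nat.mul_le_mul_left (T * k + k) h2
      nlinarith
  omega

end sweep
end RGIN

/-! ### Reading off the matching -/

namespace RGIN

/-- A GIN can output, at every matched vertex, the unit vector that encodes the unordered pair
formed by the label of the vertex and the label of its partner, and `0` at every other vertex. -/
lemma exists_readout (D : Finset ℝ) (Δ : ℕ) (Ws : ℕ → ℕ × (ℕ → ℝ)) (m : ℕ) :
    ∃ (dO : ℕ) (θ : GINParams 2 dO), ∀ (V : Type) [Fintype V] (G : SimpleGraph V),
      (∀ w : V, (G.neighborSet w).ncard ≤ Δ) → ∀ r : V → ℝ, (∀ v, r v ∈ D) → ∀ u v : V,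
        (0.5 < ∑ i, GINout θ G (fun u => ![((G.neighborSet u).ncard : ℝ), r u]) u i *
          GINout θ G (fun u => ![((G.neighborSet u).ncard : ℝ), r u]) v i) ↔
        (alg G r Ws m u ≠ r u ∧ alg G r Ws m v ≠ r v ∧
          s(r u, alg G r Ws m u) = s(r v, alg G r Ws m v)) := by
  classical
  let S : Finset (Sym2 ℝ) := D.sym2
  let idx : Sym2 ℝ → Fin (S.card + 1) := fun e =>
    if h : e ∈ S then (S.equivFin ⟨e, h⟩).castSucc else Fin.last _
  have hidx : ∀ e ∈ S, ∀ f ∈ S, idx e = idx f → e = f := by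
    intro e he f hf h
    simp only [idx, dif_pos he, dif_pos hf] at h
    simpa using S.equivFin.injective (Fin.castSucc_injective _ h)
  obtain ⟨K, Φ, hΦ⟩ := (Loc.label.map₂ (fun z q => if q = z then (0 : Fin (S.card + 1) → ℝ)
    else Pi.single (idx s(z, q)) 1) (loc_alg Ws m))
  obtain ⟨θ, hθ⟩ := exists_gin D Δ S.card K Φ
  refine ⟨_, θ, fun V _ G hG r hr u v => ?_⟩
  rw [hθ V G hG r hr u, hθ V G hG r hr v, ← hΦ, ← hΦ]
  beta_reduce
  have hS : ∀ v, s(r v, alg G r Ws m v) ∈ S := by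
    intro v
    obtain ⟨b, -, -, hb, -⟩ := (alg_inv (G := G) (r := r) Ws m).exists_partner
    exact Finset.mk_mem_sym2_iff.2 ⟨hr v, by rw [← hb]; exact hr _⟩
  by_cases hu : alg G r Ws m u = r u
  · simp [hu]; norm_num
  by_cases hv : alg G r Ws m v = r v
  · simp [hv]; norm_num
  rw [if_neg hu, if_neg hv]
  simp only [ne_eq, hu, hv, not_false_eq_true, true_and]
  by_cases h : s(r u, alg G r Ws m u) = s(r v, alg G r Ws m v)
  · rw [h]; simp [Pi.single_apply]; norm_num
  · have : idx s(r u, alg G r Ws m u) ≠ idx s(r v, alg G r Ws m v) :=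
      fun h' => h (hidx _ (hS u) _ (hS v) h')
    rw [iff_false_right h, Finset.sum_eq_zero]
    · norm_num
    · intro i _
      rw [Pi.single_apply, Pi.single_apply]
      split_ifs with h1 h2
      · exact absurd (h1.symm.trans h2) this
      all_goals simp

section output
open Classical
variable {V : Type} [Fintype V] {G : SimpleGraph V} {r q : V → ℝ} {L dO : ℕ}
  {θ : GINParams 2 dO}

lemma emb_eq (v : V) : rginMatchEmb θ G L r v = if Set.InjOn r (ballSet G v L) then
    GINout θ G (fun u => ![((G.neighborSet u).ncard : ℝ), r u]) v else 0 := by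
  rw [rginMatchEmb]
  by_cases h : Set.InjOn r (ballSet G v L)
  · rw [if_pos h, if_neg]
    rintro ⟨s, hs, t, ht, hst, e⟩
    exact hst (h hs ht e)
  · rw [if_neg h, if_pos]
    simp only [Set.InjOn] at h
    push Not at h
    obtain ⟨s, hs, t, ht, e, hst⟩ := h
    exact ⟨s, hs, t, ht, hst, e⟩

/-- When the output vectors encode the matching `q` as in `exists_readout`, an edge `u v` is selected
if and only if both ends survive the zeroing and are partners in `q`. -/
lemma mem_output (hL : 0 < L)
    (hθ : ∀ u v : V, (0.5 < ∑ i, GINout θ G (fun u => ![((G.neighborSet u).ncard : ℝ), r u]) u i *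
          GINout θ G (fun u => ![((G.neighborSet u).ncard : ℝ), r u]) v i) ↔
        (q u ≠ r u ∧ q v ≠ r v ∧ s(r u, q u) = s(r v, q v))) (u v : V) :
    s(u, v) ∈ rginMatchOutput θ G L r ↔ G.Adj u v ∧ Set.InjOn r (ballSet G u L) ∧
      Set.InjOn r (ballSet G v L) ∧ q u = r v ∧ q v = r u := by
  have key : ∀ u v, G.Adj u v → ((0.5 < ∑ i, rginMatchEmb θ G L r u i * rginMatchEmb θ G L r v i) ↔
      Set.InjOn r (ballSet G u L) ∧ Set.InjOn r (ballSet G v L) ∧ q u = r v ∧ q v = r u) := by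
    intro u v huv
    rw [emb_eq, emb_eq]
    by_cases hu : Set.InjOn r (ballSet G u L)
    swap
    · simp [hu]; norm_num
    by_cases hv : Set.InjOn r (ballSet G v L)
    swap
    · simp [hv]; norm_num
    have hne : r u ≠ r v := fun e => huv.ne (hu (mem_ball_self G u L)
      (ball_mono (by omega) (mem_ball_succ (mem_ball_self G u 0) huv)) e)
    rw [if_pos hu, if_pos hv]
    simp only [hu, hv, true_and]
    rw [hθ, Sym2.eq_iff]
    constructor
    · rintro ⟨-, -, ⟨h, -⟩ | ⟨h, h'⟩⟩
      · exact absurd h hne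
      · exact ⟨h', h.symm⟩
    · rintro ⟨h, h'⟩
      rw [h, h']
      exact ⟨hne.symm, hne, Or.inr ⟨rfl, rfl⟩⟩
  constructor
  · rintro ⟨hadj, u', v', he, h⟩
    have hadj' : G.Adj u v := hadj
    refine ⟨hadj', ?_⟩
    rcases Sym2.eq_iff.1 he with ⟨rfl, rfl⟩ | ⟨rfl, rfl⟩
    · exact (key _ _ hadj').1 h
    · obtain ⟨h1, h2, h3, h4⟩ := (key _ _ hadj'.symm).1 h
      exact ⟨h2, h1, h4, h3⟩
  · rintro ⟨hadj, h⟩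
    exact ⟨hadj, u, v, rfl, (key u v hadj).2 h⟩

lemma output_matching (hL : 0 < L)
    (hF : ∀ u v : V, s(u, v) ∈ rginMatchOutput θ G L r ↔ G.Adj u v ∧
      Set.InjOn r (ballSet G u L) ∧ Set.InjOn r (ballSet G v L) ∧ q u = r v ∧ q v = r u) :
    IsMatchingSet G (rginMatchOutput θ G L r) := by
  refine ⟨fun e he => he.1, ?_⟩
  rintro e he f hf hef v ⟨hve, hvf⟩
  obtain ⟨u, rfl⟩ := Sym2.mem_iff_exists.1 hve
  obtain ⟨u', rfl⟩ := Sym2.mem_iff_exists.1 hvf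
  obtain ⟨h1, h2, -, h3, -⟩ := (hF _ _).1 he
  obtain ⟨h1', -, -, h3', -⟩ := (hF _ _).1 hf
  have hb : ∀ w, G.Adj v w → w ∈ ballSet G v L := fun w hw =>
    ball_mono (by omega) (mem_ball_succ (mem_ball_self G v 0) hw)
  exact hef (by rw [h2 (hb _ h1) (hb _ h1') (h3.symm.trans h3')])

/-- A vertex not covered by the output is unmatched in `q`, or bad, or the partner of a bad vertex. -/
lemma card_output (hL : 0 < L) (hq : Inv G r q)
    (hF : ∀ u v : V, s(u, v) ∈ rginMatchOutput θ G L r ↔ G.Adj u v ∧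
      Set.InjOn r (ballSet G u L) ∧ Set.InjOn r (ballSet G v L) ∧ q u = r v ∧ q v = r u) :
    Fintype.card V ≤ 2 * (rginMatchOutput θ G L r).ncard + (free r q).card +
      2 * (bad G r L).card := by
  obtain ⟨b, hb, hbG, hbq, hbfix⟩ := hq.exists_partner
  rw [← ncard_covered (output_matching hL hF), Set.ncard_eq_toFinset_card']
  have hsub : (Finset.univ : Finset V) ⊆ (covered (rginMatchOutput θ G L r)).toFinset ∪
      free r q ∪ (bad G r L ∪ (bad G r L).image b) := by
    intro v _
    by_contra hv
    simp only [Finset.mem_union, Finset.mem_image, not_or, not_exists, not_and, Set.mem_toFinset,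
      free, bad, Finset.mem_filter, Finset.mem_univ, true_and, not_not] at hv
    obtain ⟨⟨h1, h2⟩, h3, h4⟩ := hv
    rw [← hbfix] at h2
    refine h1 ⟨s(v, b v), (hF _ _).2 ⟨hbG v h2, h3, ?_, (hbq v).symm, ?_⟩, by simp⟩
    · by_contra h5
      exact h4 (b v) h5 (hb v)
    · rw [← hbq, hb]
  have h1 := Finset.card_le_card hsub
  have h2 := Finset.card_union_le (bad G r L) ((bad G r L).image b)
  have h3 : ((bad G r L).image b).card ≤ (bad G r L).card := Finset.card_image_le
  have h4 := Finset.card_union_le ((covered (rginMatchOutput θ G L r)).toFinset ∪ free r q)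
    (bad G r L ∪ (bad G r L).image b)
  have h5 := Finset.card_union_le (covered (rginMatchOutput θ G L r)).toFinset (free r q)
  rw [Finset.card_univ] at h1
  omega

end output
end RGIN

/-! ### Collision probabilities -/

namespace RGIN

section prob
open Classical
variable {V : Type} [Fintype V] {D : Finset ℝ} {μ : ℝ → ℝ} {p : ℝ}

lemma sum_weight (h1 : ∑ z ∈ D, μ z = 1) :
    ∑ r ∈ Fintype.piFinset (fun _ : V => D), ∏ v, μ (r v) = 1 := by
  rw [← Finset.prod_univ_sum (fun _ : V => D) (fun _ z => μ z)]
  simp [h1]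

/-- Two distinct vertices receive the same label with probability at most `p`. -/
lemma sum_collision (h0 : ∀ z, 0 ≤ μ z) (h1 : ∑ z ∈ D, μ z = 1) (hp : ∀ z ∈ D, μ z ≤ p)
    {s t : V} (hst : s ≠ t) :
    ∑ r ∈ Fintype.piFinset (fun _ : V => D), (∏ v, μ (r v)) * (if r s = r t then 1 else 0) ≤ p := by
  have hz : ∀ z ∈ D, ∑ r ∈ Fintype.piFinset (fun _ : V => D),
      (∏ v, μ (r v)) * (if r s = z ∧ r t = z then 1 else 0) = μ z * μ z := by
    intro z hz
    -- the event that both labels are `z` factorises over the vertices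
    let g : V → ℝ → ℝ := fun v x => if (v = s ∨ v = t) then (if x = z then μ x else 0) else μ x
    have e : ∀ r : V → ℝ, (∏ v, μ (r v)) * (if r s = z ∧ r t = z then 1 else 0) =
        ∏ v, g v (r v) := by
      intro r
      split_ifs with h
      · rw [mul_one]
        refine Finset.prod_congr rfl fun v _ => ?_
        simp only [g]
        split_ifs with h2 h3
        · rfl
        · rcases h2 with rfl | rfl
          · exact absurd h.1 h3
          · exact absurd h.2 h3
        · rfl
      · rw [mul_zero, eq_comm, Finset.prod_eq_zero_iff]
        rw [not_and_or] at h
        rcases h with h | h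
        · exact ⟨s, Finset.mem_univ _, by simp [g, h]⟩
        · exact ⟨t, Finset.mem_univ _, by simp [g, h]⟩
    simp only [e]
    rw [← Finset.prod_univ_sum (fun _ : V => D) g]
    have e2 : ∀ v, ∑ x ∈ D, g v x = if v ∈ ({s, t} : Finset V) then μ z else 1 := by
      intro v
      simp only [g, Finset.mem_insert, Finset.mem_singleton]
      split_ifs with h
      · simp [hz]
      · exact h1
    simp only [e2]
    rw [Finset.prod_ite_mem, Finset.univ_inter, Finset.prod_pair hst]
  calc ∑ r ∈ Fintype.piFinset (fun _ : V => D), (∏ v, μ (r v)) * (if r s = r t then 1 else 0)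
      = ∑ r ∈ Fintype.piFinset (fun _ : V => D), ∑ z ∈ D,
          (∏ v, μ (r v)) * (if r s = z ∧ r t = z then 1 else 0) := by
        refine Finset.sum_congr rfl fun r hr => ?_
        rw [← Finset.mul_sum]
        congr 1
        have hs : r s ∈ D := Fintype.mem_piFinset.1 hr s
        rw [Finset.sum_eq_single_of_mem (r s) hs]
        · simp [eq_comm]
        · intro z _ hz
          rw [if_neg]
          exact fun h => hz h.1.symm
    _ = ∑ z ∈ D, μ z * μ z := by
        rw [Finset.sum_comm]
        exact Finset.sum_congr rfl hz
    _ ≤ ∑ z ∈ D, μ z * p := Finset.sum_le_sum fun z hz => mul_le_mul_of_nonneg_left (hp z hz) (h0 z)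
    _ = p := by rw [← Finset.sum_mul, h1, one_mul]

/-- The expected number of bad vertices. -/
lemma sum_bad (h0 : ∀ z, 0 ≤ μ z) (h1 : ∑ z ∈ D, μ z = 1) (hp : ∀ z ∈ D, μ z ≤ p) (hp0 : 0 ≤ p)
    {G : SimpleGraph V} {L N : ℕ} (hN : ∀ v, (ballSet G v L).ncard ≤ N) :
    ∑ r ∈ Fintype.piFinset (fun _ : V => D), (∏ v, μ (r v)) * ((bad G r L).card : ℝ) ≤
      Fintype.card V * ((N : ℝ) ^ 2 * p) := by
  have hpt : ∀ r : V → ℝ, ((bad G r L).card : ℝ) ≤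
      ∑ v : V, ∑ e ∈ (ballSet G v L).toFinset.offDiag, (if r e.1 = r e.2 then 1 else 0) := by
    intro r
    rw [bad, Finset.card_filter, Nat.cast_sum]
    refine Finset.sum_le_sum fun v _ => ?_
    split_ifs with h
    · rw [Nat.cast_zero]
      positivity
    · rw [Set.InjOn] at h
      push Not at h
      obtain ⟨s, hs, t, ht, e, hst⟩ := h
      have := Finset.single_le_sum (f := fun e : V × V => if r e.1 = r e.2 then (1 : ℝ) else 0)
        (fun _ _ => by positivity) (show (s, t) ∈ (ballSet G v L).toFinset.offDiag by simp [*])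
      simpa [e] using this
  calc ∑ r ∈ Fintype.piFinset (fun _ : V => D), (∏ v, μ (r v)) * ((bad G r L).card : ℝ)
      ≤ ∑ r ∈ Fintype.piFinset (fun _ : V => D), (∏ v, μ (r v)) *
        ∑ v : V, ∑ e ∈ (ballSet G v L).toFinset.offDiag, (if r e.1 = r e.2 then 1 else 0) :=
        Finset.sum_le_sum fun r _ => mul_le_mul_of_nonneg_left (hpt r)
          (Finset.prod_nonneg fun v _ => h0 _)
    _ = ∑ v : V, ∑ e ∈ (ballSet G v L).toFinset.offDiag,
        ∑ r ∈ Fintype.piFinset (fun _ : V => D),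
          (∏ v, μ (r v)) * (if r e.1 = r e.2 then 1 else 0) := by
        simp only [Finset.mul_sum]
        rw [Finset.sum_comm]
        exact Finset.sum_congr rfl fun v _ => Finset.sum_comm
    _ ≤ ∑ v : V, ∑ e ∈ (ballSet G v L).toFinset.offDiag, p :=
        Finset.sum_le_sum fun v _ => Finset.sum_le_sum fun e he =>
          sum_collision h0 h1 hp (Finset.mem_offDiag.1 he).2.2
    _ ≤ ∑ v : V, (N : ℝ) ^ 2 * p := by
        refine Finset.sum_le_sum fun v _ => ?_
        rw [Finset.sum_const, nsmul_eq_mul]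
        gcongr
        have h2 := hN v
        rw [Set.ncard_eq_toFinset_card'] at h2
        have h3 : (ballSet G v L).toFinset.offDiag.card ≤ N ^ 2 := by
          rw [Finset.offDiag_card]
          nlinarith [Nat.sub_le ((ballSet G v L).toFinset.card * (ballSet G v L).toFinset.card)
            (ballSet G v L).toFinset.card]
        exact_mod_cast h3
    _ = Fintype.card V * ((N : ℝ) ^ 2 * p) := by simp

/-- Markov's inequality for the number of bad vertices. -/
lemma prob_of_bad (h0 : ∀ z, 0 ≤ μ z) (h1 : ∑ z ∈ D, μ z = 1) (hp : ∀ z ∈ D, μ z ≤ p)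
    (hp0 : 0 ≤ p) {G : SimpleGraph V} {L N : ℕ} (hN : ∀ v, (ballSet G v L).ncard ≤ N)
    {c δ : ℝ} (hc : 0 < c) (hcδ : Fintype.card V * ((N : ℝ) ^ 2 * p) ≤ δ * c)
    {Q : (V → ℝ) → Prop} (hQ : ∀ r, (∀ v, r v ∈ D) → ((bad G r L).card : ℝ) ≤ c → Q r) :
    1 - δ ≤ probOver D μ Q := by
  have hw : ∀ r : V → ℝ, 0 ≤ ∏ v, μ (r v) := fun r => Finset.prod_nonneg fun v _ => h0 _
  have hsplit := Finset.sum_filter_add_sum_filter_not (Fintype.piFinset (fun _ : V => D)) Q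
    (fun r => ∏ v, μ (r v))
  rw [sum_weight h1] at hsplit
  have hle : c * ∑ r ∈ (Fintype.piFinset (fun _ : V => D)).filter (fun r => ¬ Q r),
      ∏ v, μ (r v) ≤ δ * c := by
    refine le_trans ?_ ((sum_bad h0 h1 hp hp0 hN).trans hcδ)
    rw [Finset.mul_sum]
    refine le_trans (Finset.sum_le_sum (g := fun r => (∏ v, μ (r v)) * ((bad G r L).card : ℝ)) ?_)
      (Finset.sum_le_sum_of_subset_of_nonneg (Finset.filter_subset _ _) ?_)
    · intro r hr
      obtain ⟨hr, hnQ⟩ := Finset.mem_filter.1 hr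
      have : c ≤ (bad G r L).card := by
        by_contra! h
        exact hnQ (hQ r (Fintype.mem_piFinset.1 hr) h.le)
      rw [mul_comm]
      exact mul_le_mul_of_nonneg_left this (hw r)
    · exact fun r _ _ => mul_nonneg (hw r) (Nat.cast_nonneg _)
  have := le_of_mul_le_mul_left (hle.trans_eq (mul_comm δ c)) hc
  unfold probOver
  linarith

end prob
end RGIN

open RGIN in
/-- Fix `Δ ≥ 2`. For all `ε, δ > 0` there exists `p > 0` such that for
every distribution `μ` on a finite set `D ⊂ ℝ` with `μ {z} ≤ p` for all `z ∈ D`, there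
exist a positive integer `L`, an output dimension `dO`, and GIN parameters `θ` such that
for every finite connected simple graph `G` with maximum degree at most `Δ`: sampling
labels i.i.d. from `μ`, running the GIN with input features `h_v = (deg v, r v)`,
zeroing out `z_v` whenever there exist distinct `s, t ∈ N_L(v)` with `r s = r t`, and
setting `F = {{u,v} ∈ E | ⟨z_u, z_v⟩ > 0.5}`, the set `F` is a matching of `G` for every
realization of the labels, and with probability at least `1 − δ` it satisfies
`|F| ≥ ν(G)/(1+ε)`. -/
theorem stmt_16 (Δ : ℕ) (hΔ : 2 ≤ Δ) (ε δ : ℝ) (hε : 0 < ε) (hδ : 0 < δ) :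
    ∃ p : ℝ, 0 < p ∧
      ∀ (D : Finset ℝ) (μ : ℝ → ℝ),
        (∀ z, 0 ≤ μ z) → (∑ z ∈ D, μ z = 1) → (∀ z ∈ D, μ z ≤ p) →
      ∃ (L : ℕ), 0 < L ∧ ∃ (dO : ℕ) (θ : GINParams 2 dO),
        ∀ (V : Type) [Fintype V] (G : SimpleGraph V),
          G.Connected → (∀ w : V, (G.neighborSet w).ncard ≤ Δ) →
          (∀ r : V → ℝ, (∀ v, r v ∈ D) →
            IsMatchingSet G (rginMatchOutput θ G L r)) ∧
          1 - δ ≤ probOver D μ (fun r : V → ℝ =>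
            (matchingNumber G : ℝ) / (1 + ε) ≤ (rginMatchOutput θ G L r).ncard) := by
  -- The three error terms below add up to `κ n`, and `n ≤ 2 (Δ + 1) ν` makes `κ n` at most
  -- `2 ε ν / (1 + ε)`.
  set κ : ℝ := ε / ((1 + ε) * (Δ + 1)) with hκ
  have hκ0 : 0 < κ := by positivity
  obtain ⟨k, hk⟩ := exists_nat_gt (3 / κ)
  have hk0' : (0 : ℝ) < k := lt_trans (by positivity) hk
  have hk0 : 0 < k := by exact_mod_cast hk0'
  obtain ⟨T, hT⟩ := exists_nat_gt (12 * (k : ℝ) ^ 2 / κ)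
  have hT0' : (0 : ℝ) < T := lt_trans (by positivity) hT
  set N : ℕ := (Δ + 1) ^ (2 * k) with hN
  have hN0 : (0 : ℝ) < N := by rw [hN]; positivity
  refine ⟨κ * δ / (9 * (N : ℝ) ^ 2), by positivity, fun D μ h0 h1 hp => ?_⟩
  have hD : D.Nonempty := by
    by_contra h
    rw [Finset.not_nonempty_iff_eq_empty.1 h] at h1
    simp at h1
  obtain ⟨Ws, P, hW1, hW2⟩ := exists_words D hD k hk0
  obtain ⟨dO, θ, hθ⟩ := exists_readout D Δ Ws (T * P)
  have hL : 0 < 2 * k := by omega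
  refine ⟨2 * k, hL, dO, θ, fun V _ G hc hG => ?_⟩
  have hF := fun (r : V → ℝ) (hr : ∀ v, r v ∈ D) => mem_output hL (hθ V G hG r hr)
  refine ⟨fun r hr => output_matching hL (hF r hr), ?_⟩
  have : Nonempty V := hc.nonempty
  have hn : (0 : ℝ) < Fintype.card V := by exact_mod_cast Fintype.card_pos
  refine prob_of_bad h0 h1 hp (by positivity) (fun v => ball_card hG v (2 * k))
    (c := κ * Fintype.card V / 9) (by positivity) (le_of_eq ?_) fun r hr hbad => ?_
  · rw [← hN]; field_simp
  have e1 : (Fintype.card V : ℝ) ≤ 2 * (rginMatchOutput θ G (2 * k) r).ncard +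
      (free r (alg G r Ws (T * P))).card + 2 * (bad G r (2 * k)).card := by
    exact_mod_cast card_output hL (alg_inv Ws (T * P)) (hF r hr)
  have e2 : (T : ℝ) * (k * (free r (alg G r Ws (T * P))).card + 2 * k * matchingNumber G) ≤
      T * (Fintype.card V + k * Fintype.card V + k * (bad G r (2 * k)).card)
        + 4 * k ^ 3 * Fintype.card V := by
    exact_mod_cast sweeps (G := G) hr hW1 hW2 T
  have e3 : κ * Fintype.card V ≤ 2 * (ε / (1 + ε)) * matchingNumber G ∨ matchingNumber G = 0 := by
    by_cases h2 : 2 ≤ Fintype.card V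
    · left
      have : (Fintype.card V : ℝ) ≤ 2 * (Δ + 1) * matchingNumber G := by
        exact_mod_cast card_le_matchingNumber hc hG h2
      calc κ * Fintype.card V ≤ κ * (2 * (Δ + 1) * matchingNumber G) := by gcongr
        _ = _ := by rw [hκ]; field_simp
    · obtain ⟨_, -, -, h⟩ := exists_max_involution G
      right; omega
  rcases e3 with e3 | e3
  swap
  · rw [e3]; simp
  have e4 : (free r (alg G r Ws (T * P))).card + 2 * (matchingNumber G : ℝ) ≤
      Fintype.card V / k + Fintype.card V + (bad G r (2 * k)).card
        + 4 * k ^ 2 * Fintype.card V / T := by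
    have hTk : (0 : ℝ) < T * k := by positivity
    refine le_of_mul_le_mul_left ?_ hTk
    refine le_trans (le_of_eq ?_) (e2.trans (le_of_eq ?_))
    · ring
    · field_simp
  have e5 : (Fintype.card V : ℝ) / k ≤ κ * Fintype.card V / 3 := by
    rw [div_lt_iff₀ hκ0] at hk
    rw [div_le_iff₀ hk0']
    nlinarith
  have e6 : 4 * (k : ℝ) ^ 2 * Fintype.card V / T ≤ κ * Fintype.card V / 3 := by
    rw [div_lt_iff₀ hκ0] at hT
    rw [div_le_iff₀ hT0']
    nlinarith
  have e7 : (matchingNumber G : ℝ) / (1 + ε) =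
      matchingNumber G - ε / (1 + ε) * matchingNumber G := by field_simp; ring
  rw [e7]
  linarith
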